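/- arXiv:2512.01614 — 2 statements merged into one kernel-verified Lean document; each statement's English description precedes it below -/
import Mathlib

section
/- Let q ≥ 3 be an integer and let G be a graph in A(q) with maximum degree Δ(G) = t ≥ q+2. Let f and g be two different proper t-edge-colorings of G, and assume that the subgraph G(f,g,t) has a component C which is a path of even length. Then there is a proper t-edge-coloring f̄ of G such that f̄ is (q+1)-equivalent to f and |M(f̄,t) ∩ M(g,t)| > |M(f,t) ∩ M(g,t)|. -/
/-!
Let `v 0, …, v (2k)` be the path, traversed so that its first edge has color `t` under `f`. Its
edges of even index then have color `t` under `f`, those of odd index have color `t` under `g`. The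
coloring `f̄` is obtained by switching the color class `t` along the whole path, two edges at a time.

During the process the edge `ab = v (2m) v (2m+1)` is uncolored and the rest of `G` has a proper
coloring `h`, for which `a` misses a color `α ≠ t` and `b` misses `t`. Such an `h` is compared
with genuine colorings of `G` through its completions (`IsCompletion`): choose a palette `S` of `q`
colors, not containing `t`, and `d ∈ S` different from `α ∈ S`; a Kempe change with the colors `d`
and `t` makes `d` missing at `b` (`exists_kempe`); now the edges with colors in `S` together
with `ab` form a subgraph of maximum degree at most `q`, which can be recolored with `S` since
`G ∈ A(q)` (`exists_recolor`). A completion agrees with `h` except on `ab` and on the `q + 1` color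
classes `S ∪ {t}`.

For the next step, let `n = v (2m+1) v (2m+2)`. Exchanging one color of `S` for `h n` changes at
most `q + 1` classes of the completion; the new palette has to contain `α`, `d` and `h n`, which is
possible as `q ≥ 3`. With this palette one can also give `n` the color `t`, color `ab` with a color
from `S` and, recoloring with `S`, leave only the next edge `v (2m+2) v (2m+3)` uncolored
(`exists_shift`). Some color of `S` is now missing at `v (2m+2)`, because `n` has left the classes
in `S`. The coloring before and the coloring after the shift agree outside `S ∪ {t}`, hence so do
their completions with palette `S`, which are therefore equivalent
(`IsCompletion.exists_step`, `exists_isCompletion`). In the last step there is no edge of color `t`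
to be uncolored, and the shifted coloring is already a coloring of `G`.

The color missing at the start `v 0` comes from `g`, which misses `t` there, so that `v 0` has degree
less than `t` (`exists_missing`).
-/

open SimpleGraph Set

namespace EdgeTrans

universe u v

variable {V : Type*} {W : Type*}

/-- The degree of a vertex. -/
noncomputable def deg (G : SimpleGraph V) (x : V) : ℕ :=
  (G.neighborSet x).ncard

/-- The maximum degree `Δ(G)`. -/
noncomputable def maxDeg (G : SimpleGraph V) : ℕ :=
  ⨆ x, deg G x

/-- A proper `t`-edge-coloring of `G`, using the colors `1, …, t`. -/
def IsProperEdgeColoring (G : SimpleGraph V) (t : ℕ) (f : Sym2 V → ℕ) : Prop :=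
  (∀ e ∈ G.edgeSet, f e ∈ Finset.Icc 1 t) ∧
  ∀ e₁ ∈ G.edgeSet, ∀ e₂ ∈ G.edgeSet, e₁ ≠ e₂ → (∃ x, x ∈ e₁ ∧ x ∈ e₂) → f e₁ ≠ f e₂

/-- The color class `M(f, j)`: the set of edges of `G` colored `j` by `f`. -/
def colorClass (G : SimpleGraph V) (f : Sym2 V → ℕ) (j : ℕ) : Set (Sym2 V) :=
  {e | e ∈ G.edgeSet ∧ f e = j}

/-- `f` and `g` differ by at most `n` color classes. -/
def DifferAtMost (G : SimpleGraph V) (n : ℕ) (f g : Sym2 V → ℕ) : Prop :=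
  {j : ℕ | colorClass G f j ≠ colorClass G g j}.ncard ≤ n

/-- `f` and `g` are `n`-equivalent proper `t`-edge-colorings: one can be transformed into the
other by a sequence of proper `t`-edge-colorings in which consecutive colorings differ by at
most `n` color classes. -/
def NEquiv (G : SimpleGraph V) (t n : ℕ) (f g : Sym2 V → ℕ) : Prop :=
  ∃ (k : ℕ) (F : ℕ → Sym2 V → ℕ), 1 ≤ k ∧ F 0 = f ∧ F k = g ∧
    (∀ i ≤ k, IsProperEdgeColoring G t (F i)) ∧
    ∀ i < k, DifferAtMost G n (F i) (F (i + 1))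

/-- The chromatic index `χ'(G)`. -/
noncomputable def chromIdx (G : SimpleGraph V) : ℕ :=
  sInf {t | ∃ f, IsProperEdgeColoring G t f}

/-- The edge chromatic transformation index `χ'_trans(G)`: the minimum `n ≥ 2` such that any
two proper `χ'(G)`-edge-colorings of `G` are `n`-equivalent. -/
noncomputable def transIdx (G : SimpleGraph V) : ℕ :=
  sInf {n | 2 ≤ n ∧ ∀ f g, IsProperEdgeColoring G (chromIdx G) f →
      IsProperEdgeColoring G (chromIdx G) g → NEquiv G (chromIdx G) n f g}

/-- `v` is a cutvertex of `G`: some two other vertices are connected in `G`, but every walk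
between them passes through `v`. -/
def IsCutVertex (G : SimpleGraph V) (x : V) : Prop :=
  ∃ a b : V, a ≠ x ∧ b ≠ x ∧ G.Reachable a b ∧ ∀ p : G.Walk a b, x ∈ p.support

/-- A block of `G`: a maximal connected subgraph without a cutvertex of the subgraph. -/
def IsBlock (G : SimpleGraph V) (B : G.Subgraph) : Prop :=
  B.coe.Connected ∧ (∀ x, ¬ IsCutVertex B.coe x) ∧
    ∀ B' : G.Subgraph, B ≤ B' → B'.coe.Connected →
      (∀ x, ¬ IsCutVertex B'.coe x) → B' = B

/-- Membership in the class `𝒜(q)`: every subgraph `H` of `G` with `Δ(H) ≤ q` has a proper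
`q`-edge-coloring. -/
def MemA (q : ℕ) (G : SimpleGraph V) : Prop :=
  ∀ H : SimpleGraph V, H ≤ G → maxDeg H ≤ q → ∃ f, IsProperEdgeColoring H q f

/-- `G` is `k`-degenerate: every (nonempty) subgraph of `G` contains a vertex of degree
at most `k` in the subgraph. -/
def Degenerate (k : ℕ) (G : SimpleGraph V) : Prop :=
  ∀ H : G.Subgraph, H.verts.Nonempty → ∃ x ∈ H.verts, (H.neighborSet x).ncard ≤ k

/-- `G` has `H` as a minor (via branch sets). -/
def HasMinor (G : SimpleGraph V) (H : SimpleGraph W) : Prop :=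
  ∃ F : W → Set V,
    (∀ w, (G.induce (F w)).Connected) ∧
    (∀ w₁ w₂, w₁ ≠ w₂ → Disjoint (F w₁) (F w₂)) ∧
    (∀ w₁ w₂, H.Adj w₁ w₂ → ∃ v₁ ∈ F w₁, ∃ v₂ ∈ F w₂, G.Adj v₁ v₂)

/-- Planarity, via Wagner's characterization: no `K₅` minor and no `K₃,₃` minor. -/
def Planar (G : SimpleGraph V) : Prop :=
  ¬ HasMinor G (completeGraph (Fin 5)) ∧
  ¬ HasMinor G (completeBipartiteGraph (Fin 3) (Fin 3))

/-- Series-parallel: no `K₄` minor. -/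
def SeriesParallel (G : SimpleGraph V) : Prop :=
  ¬ HasMinor G (completeGraph (Fin 4))

/-- `G` is chordless: in every cycle, any two nonconsecutive vertices are non-adjacent,
i.e. every edge of `G` joining two vertices of a cycle is an edge of the cycle. -/
def Chordless (G : SimpleGraph V) : Prop :=
  ∀ (x : V) (c : G.Walk x x), c.IsCycle →
    ∀ a ∈ c.support, ∀ b ∈ c.support, G.Adj a b → s(a, b) ∈ c.edges

/-- The wheel graph with hub `none` and cycle `ZMod n`. -/
def wheelGraph (n : ℕ) : SimpleGraph (Option (ZMod n)) :=
  SimpleGraph.fromRel (fun a b =>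
    a = none ∨ ∃ i : ZMod n, a = some i ∧ b = some (i + 1))

/-- `G` is a wheel graph. -/
def IsWheel (G : SimpleGraph V) : Prop :=
  ∃ n : ℕ, 3 ≤ n ∧ Nonempty (G ≃g wheelGraph n)

/-- `G` is a Halin graph: `G` is planar and is the edge-disjoint union of a spanning tree `T`
on at least four vertices having no vertex of degree two, and a cycle through exactly the
leaves of `T`. -/
def IsHalin (G : SimpleGraph V) : Prop :=
  Planar G ∧ 4 ≤ Nat.card V ∧
  ∃ T : SimpleGraph V, T ≤ G ∧ T.IsTree ∧ (∀ x : V, deg T x ≠ 2) ∧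
    ∃ (x₀ : V) (c : G.Walk x₀ x₀), c.IsCycle ∧
      (∀ e : Sym2 V, e ∈ c.edges ↔ e ∈ G.edgeSet \ T.edgeSet) ∧
      (∀ u : V, u ∈ c.support ↔ deg T u = 1)

/-- The subgraph `G(f,g,t)`: the (spanning) subgraph of `G` with edge set
`M(f,t) △ M(g,t)`. -/
def diffGraph (G : SimpleGraph V) (t : ℕ) (f g : Sym2 V → ℕ) : SimpleGraph V :=
  SimpleGraph.fromEdgeSet (symmDiff (colorClass G f t) (colorClass G g t))

/-- The walk `p` (a path or a cycle) is an entire connected component of its ambient graph: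
every edge incident with a vertex of `p` is an edge of `p`. -/
def IsComponentWalk {G : SimpleGraph V} {u x : V} (p : G.Walk u x) : Prop :=
  ∀ a ∈ p.support, ∀ b, G.Adj a b → s(a, b) ∈ p.edges

/-- The color `i` is missing at `x` under `f`. -/
def MissingAt (G : SimpleGraph V) (f : Sym2 V → ℕ) (i : ℕ) (x : V) : Prop :=
  ∀ e ∈ G.edgeSet, x ∈ e → f e ≠ i

/-- The path `p` is alternately colored with colors `a` and `b` under `f`
(an `(a,b)`-colored path). -/
def AltColored (f : Sym2 V → ℕ) (a b : ℕ) {G : SimpleGraph V} {u x : V}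
    (p : G.Walk u x) : Prop :=
  (∀ i : Fin p.edges.length, f (p.edges.get i) = if Even i.1 then a else b) ∨
  (∀ i : Fin p.edges.length, f (p.edges.get i) = if Even i.1 then b else a)

/-- The path `p` is `t`-alternating: of any two consecutive edges, one is colored `t`. -/
def AltPath (f : Sym2 V → ℕ) (t : ℕ) {G : SimpleGraph V} {u x : V}
    (p : G.Walk u x) : Prop :=
  ∀ (i : ℕ) (h : i + 1 < p.edges.length),
    f (p.edges.get ⟨i, Nat.lt_of_succ_lt h⟩) = t ∨ f (p.edges.get ⟨i + 1, h⟩) = t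

/-- The cycle `c` is `t`-alternating: of any two (cyclically) consecutive edges, one is
colored `t`. -/
def IsAltCycle (f : Sym2 V → ℕ) (t : ℕ) {G : SimpleGraph V} {u : V}
    (c : G.Walk u u) : Prop :=
  ∀ i : Fin c.edges.length,
    f (c.edges.get i) = t ∨
    f (c.edges.get ⟨(i.1 + 1) % c.edges.length, Nat.mod_lt _ i.pos⟩) = t

/-- `G` is 2-connected. -/
def TwoConnected (G : SimpleGraph V) : Prop :=
  G.Connected ∧ 3 ≤ Nat.card V ∧ ∀ x, ¬ IsCutVertex G x

/-- The union of the cycle `c` and the ears `P j` for `j < i`, as a subgraph. -/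
noncomputable def earPrefix {G : SimpleGraph V} {v₀ : V} (c : G.Walk v₀ v₀) {n : ℕ}
    {x y : Fin n → V} (P : ∀ i : Fin n, G.Walk (x i) (y i)) (i : ℕ) : G.Subgraph :=
  c.toSubgraph ⊔ ⨆ j : Fin n, ⨆ _ : (j : ℕ) < i, (P j).toSubgraph

/-- `c, P 0, …, P (n-1)` is a `t`-alternating ear decomposition with respect to the cycle `c`:
`c` is a `t`-alternating cycle, and each `P i` is a `(cᵢ, t)`-colored path (`cᵢ ≤ t - 1`) which
is an ear of `c ∪ P 0 ∪ … ∪ P i`, i.e. its endpoints lie in the previous part and its internal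
vertices have degree 2 in `c ∪ P 0 ∪ … ∪ P i`. -/
def IsEarDecomp (G : SimpleGraph V) (f : Sym2 V → ℕ) (t : ℕ) {v₀ : V} (c : G.Walk v₀ v₀)
    (n : ℕ) (x y : Fin n → V) (P : ∀ i : Fin n, G.Walk (x i) (y i)) : Prop :=
  c.IsCycle ∧ IsAltCycle f t c ∧
  ∀ i : Fin n,
    (P i).IsPath ∧ 1 ≤ (P i).length ∧
    (∃ ci : ℕ, ci ≤ t - 1 ∧ AltColored f ci t (P i)) ∧
    x i ∈ (earPrefix c P (i : ℕ)).verts ∧ y i ∈ (earPrefix c P (i : ℕ)).verts ∧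
    ∀ a ∈ (P i).support, a ≠ x i → a ≠ y i →
      ((earPrefix c P ((i : ℕ) + 1)).neighborSet a).ncard = 2

/-- The line graph of `G`. -/
def lineGr (G : SimpleGraph V) : SimpleGraph G.edgeSet :=
  SimpleGraph.fromRel (fun e₁ e₂ => ∃ x, x ∈ (e₁ : Sym2 V) ∧ x ∈ (e₂ : Sym2 V))

/-- The clique number (in `ℕ∞`). -/
noncomputable def cliqueNumE (G : SimpleGraph V) : ℕ∞ :=
  sSup {n : ℕ∞ | ∃ (m : ℕ) (s : Finset V), n = (m : ℕ∞) ∧ G.IsNClique m s}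

/-- `G` is a perfect graph: every induced subgraph has chromatic number equal to its
clique number. -/
def IsPerfect (G : SimpleGraph V) : Prop :=
  ∀ s : Set V, (G.induce s).chromaticNumber = cliqueNumE (G.induce s)

/-- A partition of the vertex set of `G` into `n` cliques, each of size `sz`. -/
def IsCliquePartition (G : SimpleGraph V) (n sz : ℕ) (P : Set (Set V)) : Prop :=
  P.ncard = n ∧ (∀ s ∈ P, G.IsClique s ∧ s.ncard = sz) ∧
  ⋃₀ P = Set.univ ∧ P.Pairwise fun s₁ s₂ => Disjoint s₁ s₂

/-- A proper vertex `n`-coloring of `G`, viewed as a partition of the vertex set into `n`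
independent sets (color classes). -/
def IsIndepPartition (G : SimpleGraph V) (n : ℕ) (P : Set (Set V)) : Prop :=
  P.ncard = n ∧ (∀ s ∈ P, ∀ a ∈ s, ∀ b ∈ s, ¬ G.Adj a b) ∧
  ⋃₀ P = Set.univ ∧ P.Pairwise fun s₁ s₂ => Disjoint s₁ s₂

/-- The graph `H(p,n)`: vertex classes `V_1, …, V_{2n}` of size `p` (indexed here by
`ZMod (2n)`), with two vertices adjacent iff they lie in the same class or in (cyclically)
consecutive classes. -/
def Hgraph (p n : ℕ) : SimpleGraph (ZMod (2 * n) × Fin p) :=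
  SimpleGraph.fromRel (fun a b => a.1 = b.1 ∨ a.1 + 1 = b.1)

/-- The clique partition `{C_1, …, C_n}` of `H(p,n)`, `C_i = V_{2i-1} ∪ V_{2i}`. -/
def Cpart (p n : ℕ) : Set (Set (ZMod (2 * n) × Fin p)) :=
  {s | ∃ i : Fin n, s = {x | x.1 = ((2 * (i : ℕ) : ℕ) : ZMod (2 * n)) ∨
      x.1 = ((2 * (i : ℕ) + 1 : ℕ) : ZMod (2 * n))}}

/-- The clique partition `{R_1, …, R_n}` of `H(p,n)`, `R_1 = V_{2n} ∪ V_1` and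
`R_i = V_{2i-2} ∪ V_{2i-1}`. -/
def Rpart (p n : ℕ) : Set (Set (ZMod (2 * n) × Fin p)) :=
  {s | ∃ i : Fin n, s = {x | x.1 = ((2 * (i : ℕ) : ℕ) : ZMod (2 * n)) - 1 ∨
      x.1 = ((2 * (i : ℕ) : ℕ) : ZMod (2 * n))}}

/-- A multigraph on vertices `α` with edges `β`: each edge has two distinct endpoints. -/
structure Multigraph (α : Type u) (β : Type v) where
  ends : β → Sym2 α
  not_isDiag : ∀ e, ¬ (ends e).IsDiag

namespace Multigraph

variable {α : Type u} {β : Type v}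

/-- A proper `t`-edge-coloring of a multigraph, with colors `1, …, t`. -/
def IsProper (G : Multigraph α β) (t : ℕ) (f : β → ℕ) : Prop :=
  (∀ e, f e ∈ Finset.Icc 1 t) ∧
  ∀ e₁ e₂ : β, e₁ ≠ e₂ → (∃ x, x ∈ G.ends e₁ ∧ x ∈ G.ends e₂) → f e₁ ≠ f e₂

/-- The color class `M(f,j)` of a multigraph edge coloring. -/
def mColorClass (f : β → ℕ) (j : ℕ) : Set β := {e | f e = j}

/-- `f` and `g` differ by at most `n` color classes. -/
def MDifferAtMost (n : ℕ) (f g : β → ℕ) : Prop :=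
  {j : ℕ | mColorClass f j ≠ mColorClass g j}.ncard ≤ n

/-- `n`-equivalence of proper `t`-edge-colorings of a multigraph. -/
def MNEquiv (G : Multigraph α β) (t n : ℕ) (f g : β → ℕ) : Prop :=
  ∃ (k : ℕ) (F : ℕ → β → ℕ), 1 ≤ k ∧ F 0 = f ∧ F k = g ∧
    (∀ i ≤ k, G.IsProper t (F i)) ∧ ∀ i < k, MDifferAtMost n (F i) (F (i + 1))

/-- The chromatic index of a multigraph. -/
noncomputable def mChromIdx (G : Multigraph α β) : ℕ :=
  sInf {t | ∃ f, G.IsProper t f}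

/-- The edge chromatic transformation index of a multigraph. -/
noncomputable def mTransIdx (G : Multigraph α β) : ℕ :=
  sInf {n | 2 ≤ n ∧ ∀ f g, G.IsProper G.mChromIdx f → G.IsProper G.mChromIdx g →
      G.MNEquiv G.mChromIdx n f g}

/-- The degree of a vertex in a multigraph. -/
noncomputable def mDeg (G : Multigraph α β) (x : α) : ℕ := {e | x ∈ G.ends e}.ncard

/-- The underlying simple graph of a multigraph. -/
def toSimple (G : Multigraph α β) : SimpleGraph α :=
  SimpleGraph.fromEdgeSet (Set.range G.ends)

end Multigraph



/-! ### Equivalence of colorings -/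

/-- Two colors coincide, or both lie in the palette `S`. For two colorings that are related in this
way on every edge, all color classes outside `S` are equal. -/
def AgreeOff (S : Finset ℕ) (a b : ℕ) : Prop := a = b ∨ (a ∈ S ∧ b ∈ S)

lemma AgreeOff.symm {S : Finset ℕ} {a b : ℕ} (h : AgreeOff S a b) : AgreeOff S b a := by
  unfold AgreeOff at *; tauto

lemma AgreeOff.trans {S : Finset ℕ} {a b c : ℕ} (h : AgreeOff S a b) (h' : AgreeOff S b c) :
    AgreeOff S a c := by
  unfold AgreeOff at *
  rcases h with rfl | h
  · exact h'
  · rcases h' with rfl | h'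
    · exact Or.inr h
    · exact Or.inr ⟨h.1, h'.2⟩

lemma AgreeOff.mono {S T : Finset ℕ} (hST : S ⊆ T) {a b : ℕ} (h : AgreeOff S a b) :
    AgreeOff T a b := h.imp id fun h => ⟨hST h.1, hST h.2⟩

lemma AgreeOff.mem_left {S : Finset ℕ} {a b : ℕ} (h : AgreeOff S a b) (hb : b ∈ S) : a ∈ S := by
  rcases h with rfl | h
  · exact hb
  · exact h.1

lemma AgreeOff.not_mem {S : Finset ℕ} {a b : ℕ} (h : AgreeOff S a b) (hb : b ∉ S) : a = b := by
  rcases h with rfl | h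
  · rfl
  · exact absurd h.2 hb

lemma nEquiv_of_agreeOff {G : SimpleGraph V} {t n : ℕ} {f g : Sym2 V → ℕ} (S : Finset ℕ)
    (hS : S.card ≤ n) (hf : IsProperEdgeColoring G t f) (hg : IsProperEdgeColoring G t g)
    (h : ∀ e ∈ G.edgeSet, AgreeOff S (f e) (g e)) : NEquiv G t n f g := by
  have key : DifferAtMost G n f g := by
    have hsub : {j : ℕ | colorClass G f j ≠ colorClass G g j} ⊆ (S : Set ℕ) := by
      intro j hj
      by_contra hjS
      apply hj
      ext e
      simp only [colorClass, Set.mem_ofPred_eq]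
      constructor
      · rintro ⟨he, rfl⟩
        exact ⟨he, ((h e he).symm.not_mem hjS)⟩
      · rintro ⟨he, rfl⟩
        exact ⟨he, ((h e he).not_mem hjS)⟩
    unfold DifferAtMost
    calc _ ≤ (S : Set ℕ).ncard := Set.ncard_le_ncard hsub S.finite_toSet
      _ = S.card := Set.ncard_coe_finset S
      _ ≤ n := hS
  refine ⟨1, fun i => if i = 0 then f else g, le_rfl, by simp, by simp, ?_, ?_⟩
  · intro i _
    by_cases hi : i = 0 <;> simp [hi, hf, hg]
  · intro i hi
    obtain rfl : i = 0 := by omega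
    simpa using key

lemma NEquiv.trans' {G : SimpleGraph V} {t n : ℕ} {f g h : Sym2 V → ℕ}
    (h₁ : NEquiv G t n f g) (h₂ : NEquiv G t n g h) : NEquiv G t n f h := by
  obtain ⟨k, F, hk, hF0, hFk, hFp, hFd⟩ := h₁
  obtain ⟨l, F', hl, hF'0, hF'l, hF'p, hF'd⟩ := h₂
  refine ⟨k + l, fun i => if i ≤ k then F i else F' (i - k), by omega, by simp [hF0], ?_, ?_, ?_⟩
  · have : ¬ (k + l ≤ k) := by omega
    simp [this, hF'l]
  · intro i hi
    by_cases hik : i ≤ k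
    · simpa [hik] using hFp i hik
    · simpa [hik] using hF'p (i - k) (by omega)
  · intro i hi
    by_cases hik : i + 1 ≤ k
    · have h1 : i ≤ k := by omega
      simpa [hik, h1] using hFd i (by omega)
    · by_cases hik' : i ≤ k
      · obtain rfl : i = k := by omega
        simpa [hFk, hF'0] using hF'd 0 (by omega)
      · have := hF'd (i - k) (by omega)
        rw [show i - k + 1 = i + 1 - k by omega] at this
        simpa [hik, hik'] using this

/-! ### Recoloring a subgraph of maximum degree at most `q` -/

/-- The edges of `Y` at `v` inject into the palette `S`: `e` is mapped to a color `β` that no other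
edge of `Y` at `v` has under `h`, and the other edges are mapped to their colors. -/
lemma ncard_incident_le [Fintype V] (Y : Set (Sym2 V)) (S : Finset ℕ) (h : Sym2 V → ℕ) (v : V)
    (e : Sym2 V)
    (hinj : ∀ e₁ ∈ Y, ∀ e₂ ∈ Y, e₁ ≠ e → e₂ ≠ e → e₁ ≠ e₂ → v ∈ e₁ → v ∈ e₂ → h e₁ ≠ h e₂)
    (hmap : ∀ e₁ ∈ Y, v ∈ e₁ → e₁ ≠ e → h e₁ ∈ S)
    (hmiss : v ∈ e → e ∈ Y → ∃ β ∈ S, ∀ e₁ ∈ Y, v ∈ e₁ → e₁ ≠ e → h e₁ ≠ β) :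
    {e₁ | e₁ ∈ Y ∧ v ∈ e₁}.ncard ≤ S.card := by
  classical
  rw [← Set.ncard_coe_finset S]
  by_cases hv : v ∈ e ∧ e ∈ Y
  · obtain ⟨β, hβ, hm⟩ := hmiss hv.1 hv.2
    apply Set.ncard_le_ncard_of_injOn (fun e₁ => if e₁ = e then β else h e₁)
    · rintro e₁ ⟨h1, h2⟩
      by_cases he : e₁ = e
      · simpa [he] using hβ
      · simpa [he] using hmap e₁ h1 h2 he
    · rintro e₁ ⟨h1, h2⟩ e₂ ⟨h3, h4⟩ heq
      by_cases he₁ : e₁ = e <;> by_cases he₂ : e₂ = e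
      · rw [he₁, he₂]
      · simp only [he₁, he₂, if_true, if_false] at heq
        exact absurd heq.symm (hm e₂ h3 h4 he₂)
      · simp only [he₁, he₂, if_true, if_false] at heq
        exact absurd heq (hm e₁ h1 h2 he₁)
      · simp only [he₁, he₂, if_false] at heq
        by_contra hne
        exact hinj e₁ h1 e₂ h3 he₁ he₂ hne h2 h4 heq
  · have hne : ∀ e₁, e₁ ∈ Y → v ∈ e₁ → e₁ ≠ e := by
      rintro e₁ h1 h2 rfl; exact hv ⟨h2, h1⟩
    apply Set.ncard_le_ncard_of_injOn h
    · rintro e₁ ⟨h1, h2⟩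
      exact hmap e₁ h1 h2 (hne e₁ h1 h2)
    · rintro e₁ ⟨h1, h2⟩ e₂ ⟨h3, h4⟩ heq
      by_contra hn
      exact hinj e₁ h1 e₂ h3 (hne _ h1 h2) (hne _ h3 h4) hn h2 h4 heq

/-- The only use of `MemA`: if the edges in `X` have degree at most `q = |S|` everywhere and the
remaining edges avoid the palette `S`, then the edges in `X` can be recolored with `S`. -/
lemma exists_recolor [Fintype V] {q t : ℕ} {G G' : SimpleGraph V} (hA : MemA q G) (hG : G' ≤ G)
    (S : Finset ℕ) (hSc : S.card = q) (hS : S ⊆ Finset.Icc 1 t) (X : Set (Sym2 V))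
    (base : Sym2 V → ℕ) (hbase : IsProperEdgeColoring (G'.deleteEdges X) t base)
    (hbS : ∀ e ∈ G'.edgeSet, e ∉ X → base e ∉ S)
    (hdeg : ∀ v, {e | e ∈ G'.edgeSet ∩ X ∧ v ∈ e}.ncard ≤ q) :
    ∃ φ, IsProperEdgeColoring G' t φ ∧ (∀ e ∈ G'.edgeSet, e ∈ X → φ e ∈ S) ∧
      ∀ e, e ∉ X → φ e = base e := by
  classical
  set H : SimpleGraph V := SimpleGraph.fromEdgeSet (G'.edgeSet ∩ X) with hH
  have hHe : H.edgeSet = G'.edgeSet ∩ X := by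
    rw [hH, SimpleGraph.edgeSet_fromEdgeSet]
    ext e
    simp only [Set.mem_sdiff, Set.mem_inter_iff]
    constructor
    · exact fun h => h.1
    · exact fun h => ⟨h, fun hd => G'.not_isDiag_of_mem_edgeSet h.1 hd⟩
  have hHle : H ≤ G := by
    rw [← SimpleGraph.edgeSet_subset_edgeSet, hHe]
    exact fun e he => SimpleGraph.edgeSet_subset_edgeSet.2 hG he.1
  have hHdeg : maxDeg H ≤ q := by
    apply ciSup_le'
    intro v
    refine le_trans ?_ (hdeg v)
    apply Set.ncard_le_ncard_of_injOn (fun y => s(v, y))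
    · intro y hy
      have : s(v, y) ∈ H.edgeSet := hy
      rw [hHe] at this
      exact ⟨this, Sym2.mem_mk_left v y⟩
    · intro y _ z _ hyz
      exact Sym2.congr_right.1 hyz
  obtain ⟨c, hc1, hc2⟩ := hA H hHle hHdeg
  rw [hHe] at hc1 hc2
  -- the colors `1, …, q` are renamed as the elements of `S`
  have hcard : (Finset.Icc 1 q).card = S.card := by simp [hSc]
  let σ := Finset.equivOfCardEq hcard
  let r : ℕ → ℕ := fun i => if h : i ∈ Finset.Icc 1 q then (σ ⟨i, h⟩ : ℕ) else 0
  have hr1 : ∀ i ∈ Finset.Icc 1 q, r i ∈ S := by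
    intro i hi
    simp only [r, hi, dif_pos]
    exact (σ ⟨i, hi⟩).2
  have hr2 : ∀ i ∈ Finset.Icc 1 q, ∀ j ∈ Finset.Icc 1 q, r i = r j → i = j := by
    intro i hi j hj hij
    simp only [r, hi, hj, dif_pos] at hij
    have := σ.injective (Subtype.ext hij)
    simpa using this
  have hmem : ∀ e ∈ G'.edgeSet, e ∉ X → e ∈ (G'.deleteEdges X).edgeSet := by
    intro e he hX
    rw [SimpleGraph.edgeSet_deleteEdges]
    exact ⟨he, hX⟩
  refine ⟨fun e => if e ∈ X then r (c e) else base e, ⟨?_, ?_⟩, ?_, ?_⟩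
  · intro e he
    by_cases hX : e ∈ X
    · simp only [hX, if_true]
      exact hS (hr1 _ (hc1 e ⟨he, hX⟩))
    · simp only [hX, if_false]
      exact hbase.1 e (hmem e he hX)
  · intro e₁ h1 e₂ h2 hne hx
    by_cases hX1 : e₁ ∈ X <;> by_cases hX2 : e₂ ∈ X <;> simp only [hX1, hX2, if_true, if_false]
    · intro heq
      exact hc2 e₁ ⟨h1, hX1⟩ e₂ ⟨h2, hX2⟩ hne hx
        (hr2 _ (hc1 e₁ ⟨h1, hX1⟩) _ (hc1 e₂ ⟨h2, hX2⟩) heq)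
    · intro heq
      exact hbS e₂ h2 hX2 (heq ▸ hr1 _ (hc1 e₁ ⟨h1, hX1⟩))
    · intro heq
      exact hbS e₁ h1 hX1 (heq ▸ hr1 _ (hc1 e₂ ⟨h2, hX2⟩))
    · exact hbase.2 e₁ (hmem e₁ h1 hX1) e₂ (hmem e₂ h2 hX2) hne hx
  · intro e he hX
    simp only [hX, if_true]
    exact hr1 _ (hc1 e ⟨he, hX⟩)
  · intro e hX
    simp [hX]

/-- Kempe change at a vertex `b` missing the color `t`: interchange `d` and `t` on the component
containing `b` of the subgraph formed by the edges colored `d` or `t`. -/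
lemma exists_kempe (G : SimpleGraph V) (t d : ℕ) (hd : d ∈ Finset.Icc 1 t)
    (h : Sym2 V → ℕ) (hh : IsProperEdgeColoring G t h) (b : V) (hb : MissingAt G h t b) :
    ∃ h', IsProperEdgeColoring G t h' ∧ MissingAt G h' d b ∧
      ∀ e, AgreeOff {d, t} (h' e) (h e) := by
  classical
  set K : SimpleGraph V := SimpleGraph.fromEdgeSet {e | e ∈ G.edgeSet ∧ (h e = d ∨ h e = t)}
  have hoff : ∀ e, AgreeOff {d, t}
      (if ∃ v ∈ e, K.Reachable b v then Equiv.swap d t (h e) else h e) (h e) := by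
    intro e
    split_ifs
    · rcases eq_or_ne (h e) d with h1 | h1
      · right; simp [h1]
      · rcases eq_or_ne (h e) t with h2 | h2
        · right; simp [h2]
        · left; exact Equiv.swap_apply_of_ne_of_ne h1 h2
    · exact Or.inl rfl
  -- an edge that meets the component at `y` but not at `x` has neither of the two colors
  have hfix : ∀ e₁ ∈ G.edgeSet, ∀ x ∈ e₁, ¬ K.Reachable b x → (∃ v ∈ e₁, K.Reachable b v) →
      Equiv.swap d t (h e₁) = h e₁ := by
    rintro e₁ h1 x hx hnx ⟨y, hy, hry⟩
    have hxy : x ≠ y := by rintro rfl; exact hnx hry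
    have he : e₁ = s(y, x) := ((Sym2.mem_and_mem_iff hxy.symm).1 ⟨hy, hx⟩)
    have : ¬ (h e₁ = d ∨ h e₁ = t) := by
      intro hc
      apply hnx
      refine hry.trans (SimpleGraph.Adj.reachable ?_)
      rw [SimpleGraph.fromEdgeSet_adj]
      exact ⟨by rw [← he]; exact ⟨h1, hc⟩, hxy.symm⟩
    push Not at this
    exact Equiv.swap_apply_of_ne_of_ne this.1 this.2
  refine ⟨fun e => if ∃ v ∈ e, K.Reachable b v then Equiv.swap d t (h e) else h e,
    ⟨?_, ?_⟩, ?_, hoff⟩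
  · intro e he
    rcases hoff e with h1 | h1
    · simp only [h1]; exact hh.1 e he
    · have ht1 : t ∈ Finset.Icc 1 t := by simp at hd ⊢; omega
      have := h1.1
      simp only [Finset.mem_insert, Finset.mem_singleton] at this
      rcases this with h2 | h2
      · simp only [h2]; exact hd
      · simp only [h2]; exact ht1
  · intro e₁ h1 e₂ h2 hne hx
    have hp := hh.2 e₁ h1 e₂ h2 hne hx
    obtain ⟨x, hx1, hx2⟩ := hx
    by_cases hr1 : ∃ v ∈ e₁, K.Reachable b v <;> by_cases hr2 : ∃ v ∈ e₂, K.Reachable b v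
    · simp only [hr1, hr2, if_true]
      exact fun heq => hp ((Equiv.swap d t).injective heq)
    · simp only [hr1, hr2, if_true, if_false]
      rwa [hfix e₁ h1 x hx1 (fun hr => hr2 ⟨x, hx2, hr⟩) hr1]
    · simp only [hr1, hr2, if_true, if_false]
      rwa [hfix e₂ h2 x hx2 (fun hr => hr1 ⟨x, hx1, hr⟩) hr2]
    · simp only [hr1, hr2, if_false]
      exact hp
  · intro e he hbe
    have : ∃ v ∈ e, K.Reachable b v := ⟨b, hbe, SimpleGraph.Reachable.refl b⟩
    simp only [this, if_true]
    intro heq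
    apply hb e he hbe
    apply (Equiv.swap d t).injective
    rw [heq, Equiv.swap_apply_right]

/-! ### Completing a coloring with one uncolored edge -/

/-- If `h` colors all edges but `e = ab`, where `a` and `b` miss distinct colors of `S`, then
recoloring with `S` completes it to a coloring of `G`. -/
lemma exists_completion [Fintype V] {q t : ℕ} {G : SimpleGraph V} (hA : MemA q G)
    (S : Finset ℕ) (hSc : S.card = q) (hS : S ⊆ Finset.Icc 1 t) {a b : V}
    (h : Sym2 V → ℕ) (hh : IsProperEdgeColoring (G.deleteEdges {s(a, b)}) t h)
    {α d : ℕ} (hα : α ∈ S) (hd : d ∈ S)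
    (ha : MissingAt (G.deleteEdges {s(a, b)}) h α a)
    (hb : MissingAt (G.deleteEdges {s(a, b)}) h d b) :
    ∃ φ, IsProperEdgeColoring G t φ ∧ (s(a, b) ∈ G.edgeSet → φ s(a, b) ∈ S) ∧
      ∀ e ∈ G.edgeSet, e ≠ s(a, b) → AgreeOff S (φ e) (h e) := by
  have hmem : ∀ e ∈ G.edgeSet, e ≠ s(a, b) → e ∈ (G.deleteEdges {s(a, b)}).edgeSet := by
    intro e he hne
    rw [SimpleGraph.edgeSet_deleteEdges]
    exact ⟨he, hne⟩
  refine (exists_recolor (G' := G) (t := t) hA le_rfl S hSc hS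
    {e | e = s(a, b) ∨ h e ∈ S} h ?_ ?_ ?_).elim ?_
  rotate_right
  · rintro φ ⟨h1, h2, h3⟩
    refine ⟨φ, h1, fun he => h2 _ he (Or.inl rfl), ?_⟩
    intro e he hne
    by_cases hX : h e ∈ S
    · exact Or.inr ⟨h2 e he (Or.inr hX), hX⟩
    · exact Or.inl (h3 e (by simp [hX, hne]))
  · have hm : ∀ e ∈ (G.deleteEdges {e | e = s(a, b) ∨ h e ∈ S}).edgeSet,
        e ∈ (G.deleteEdges {s(a, b)}).edgeSet := by
      intro e he
      rw [SimpleGraph.edgeSet_deleteEdges] at he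
      exact hmem e he.1 fun h => he.2 (Or.inl h)
    exact ⟨fun e he => hh.1 e (hm e he), fun e₁ h1 e₂ h2 => hh.2 e₁ (hm _ h1) e₂ (hm _ h2)⟩
  · intro e _ hX hc
    exact hX (Or.inr hc)
  · intro v
    rw [← hSc]
    apply ncard_incident_le _ S h v s(a, b)
    · intro e₁ h1 e₂ h2 hn1 hn2 hne hv1 hv2
      exact hh.2 e₁ (hmem _ h1.1 hn1) e₂ (hmem _ h2.1 hn2) hne ⟨v, hv1, hv2⟩
    · intro e₁ h1 _ hn1
      exact h1.2.resolve_left hn1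
    · intro hv _
      rw [Sym2.mem_iff] at hv
      rcases hv with rfl | rfl
      · exact ⟨α, hα, fun e₁ h1 hv1 hn1 => ha e₁ (hmem _ h1.1 hn1) hv1⟩
      · exact ⟨d, hd, fun e₁ h1 hv1 hn1 => hb e₁ (hmem _ h1.1 hn1) hv1⟩

/-- `φ` is a coloring of `G` obtained from the coloring `h` of `G - ab` by a `(d,t)`-Kempe change
(giving `h'`, for which `b` misses `d`), followed by recoloring with a palette `S` of `q` colors
different from `t`; here `α ∈ S` is missing at `a` and `d ∈ S`. -/
def IsCompletion (G : SimpleGraph V) (q t : ℕ) (a b : V) (h φ : Sym2 V → ℕ) : Prop :=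
  ∃ (h' : Sym2 V → ℕ) (α d : ℕ) (S : Finset ℕ), S ⊆ Finset.Icc 1 (t - 1) ∧ S.card = q ∧
    α ∈ S ∧ d ∈ S ∧ α ≠ d ∧
    IsProperEdgeColoring (G.deleteEdges {s(a, b)}) t h' ∧ (∀ e, AgreeOff {d, t} (h' e) (h e)) ∧
    MissingAt (G.deleteEdges {s(a, b)}) h α a ∧
    MissingAt (G.deleteEdges {s(a, b)}) h' d b ∧
    IsProperEdgeColoring G t φ ∧ φ s(a, b) ∈ S ∧
    ∀ e ∈ G.edgeSet, e ≠ s(a, b) → AgreeOff S (φ e) (h' e)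

lemma MissingAt.of_agreeOff {G : SimpleGraph V} {h h' : Sym2 V → ℕ} {d t α : ℕ} {a : V}
    (hoff : ∀ e, AgreeOff {d, t} (h' e) (h e)) (hd : α ≠ d) (ht : α ≠ t)
    (ha : MissingAt G h α a) : MissingAt G h' α a := by
  intro e he hae heq
  have := ((hoff e).symm.not_mem (by simp [heq, hd, ht]))
  exact ha e he hae (this.trans heq)

/-- A coloring `ψ` of `G` that agrees with `h` outside `S ∪ {t}` is equivalent to some completion
of `h`. -/
lemma exists_isCompletion [Fintype V] {q t : ℕ} (hq : 3 ≤ q) {G : SimpleGraph V} (hA : MemA q G)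
    (S : Finset ℕ) (hSc : S.card = q) (hS : S ⊆ Finset.Icc 1 (t - 1)) {a b : V}
    (hab : s(a, b) ∈ G.edgeSet)
    (h ψ : Sym2 V → ℕ) (hh : IsProperEdgeColoring (G.deleteEdges {s(a, b)}) t h)
    {α : ℕ} (hα : α ∈ S)
    (ha : MissingAt (G.deleteEdges {s(a, b)}) h α a)
    (hb : MissingAt (G.deleteEdges {s(a, b)}) h t b)
    (hψ : IsProperEdgeColoring G t ψ) (hψe : ψ s(a, b) ∈ insert t S)
    (hoff : ∀ e ∈ G.edgeSet, e ≠ s(a, b) → AgreeOff (insert t S) (h e) (ψ e)) :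
    ∃ φ, IsCompletion G q t a b h φ ∧ NEquiv G t (q + 1) φ ψ := by
  classical
  have hne : (S.erase α).Nonempty := by
    rw [← Finset.card_pos, Finset.card_erase_of_mem hα]; omega
  obtain ⟨d, hd⟩ := hne
  rw [Finset.mem_erase] at hd
  have hαI := Finset.mem_Icc.1 (hS hα)
  have hdI := Finset.mem_Icc.1 (hS hd.2)
  have hS' : S ⊆ Finset.Icc 1 t := by
    intro i hi
    have := Finset.mem_Icc.1 (hS hi)
    exact Finset.mem_Icc.2 ⟨this.1, by omega⟩
  obtain ⟨h', h'p, h'd, h'o⟩ := exists_kempe (G.deleteEdges {s(a, b)}) t d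
    (hS' hd.2) h hh b hb
  have ha' := ha.of_agreeOff h'o hd.1.symm (by omega)
  obtain ⟨φ, hφ, hφe, hφo⟩ := exists_completion hA S hSc hS' h' h'p hα hd.2 ha' h'd
  refine ⟨φ, ⟨h', α, d, S, hS, hSc, hα, hd.2, hd.1.symm, h'p, h'o, ha, h'd, hφ, hφe hab, hφo⟩, ?_⟩
  apply nEquiv_of_agreeOff (insert t S) (by have := Finset.card_insert_le t S; omega) hφ hψ
  intro e he
  by_cases hee : e = s(a, b)
  · subst hee
    exact Or.inr ⟨Finset.mem_insert_of_mem (hφe hab), hψe⟩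
  · have hdt : ({d, t} : Finset ℕ) ⊆ insert t S := by
      intro i hi
      simp only [Finset.mem_insert, Finset.mem_singleton] at hi ⊢
      rcases hi with rfl | rfl
      · exact Or.inr hd.2
      · exact Or.inl rfl
    exact ((hφo e he hee).mono (Finset.subset_insert _ _)).trans
      (((h'o e).mono hdt).trans (hoff e he hee))

/-! ### Moving the uncolored edge along the path -/

/-- If `e = ab` is uncolored, `a` misses a color `α ∈ S` and `b` misses `t`, then the edge `n = bc`
can be given the color `t` and `e` a color from `S ∋ h n`, the other edges being recolored with `S`.
The only conflicts are those between `n` and the edges of color `t` at `c`, which lie in `D`.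
Since `n` is no longer colored with `S`, some color of `S` is missing at `c`. -/
lemma exists_shift [Fintype V] {q t : ℕ} (hq : 3 ≤ q) {G : SimpleGraph V} (hA : MemA q G)
    (S : Finset ℕ) (hSc : S.card = q) (hS : S ⊆ Finset.Icc 1 (t - 1)) {a b c : V}
    (hab : s(a, b) ∈ G.edgeSet) (hbc : s(b, c) ∈ G.edgeSet) (hac : a ≠ c)
    (h : Sym2 V → ℕ) (hh : IsProperEdgeColoring (G.deleteEdges {s(a, b)}) t h)
    {α : ℕ} (hα : α ∈ S) (hn : h s(b, c) ∈ S)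
    (ha : MissingAt (G.deleteEdges {s(a, b)}) h α a)
    (hb : MissingAt (G.deleteEdges {s(a, b)}) h t b)
    (D : Set (Sym2 V)) (hDe : s(a, b) ∉ D)
    (hD : ∀ e ∈ G.edgeSet, e ≠ s(a, b) → c ∈ e → h e = t → e ∈ D) :
    ∃ h₁, IsProperEdgeColoring (G.deleteEdges D) t h₁ ∧ h₁ s(b, c) = t ∧ h₁ s(a, b) ∈ S ∧
      (∀ e ∈ G.edgeSet, e ∉ D → e ≠ s(a, b) → e ≠ s(b, c) → AgreeOff S (h₁ e) (h e)) ∧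
      ∃ β ∈ S, MissingAt (G.deleteEdges D) h₁ β c := by
  classical
  have hne : s(b, c) ≠ s(a, b) := by
    intro heq
    rw [Sym2.eq_swap, Sym2.congr_left] at heq
    exact hac heq.symm
  have hbc' : b ≠ c := (G.mem_edgeSet.1 hbc).ne
  have hab' : a ≠ b := (G.mem_edgeSet.1 hab).ne
  have hcab : c ∉ s(a, b) := by
    rw [Sym2.mem_iff]; rintro (h | h)
    · exact hac h.symm
    · exact hbc' h.symm
  have htS : t ∉ S := by
    intro hc
    have := Finset.mem_Icc.1 (hS hc); omega
  have hS' : S ⊆ Finset.Icc 1 t := by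
    intro i hi
    have := Finset.mem_Icc.1 (hS hi)
    exact Finset.mem_Icc.2 ⟨this.1, by omega⟩
  have ht1 : t ∈ Finset.Icc 1 t := by
    have := Finset.mem_Icc.1 (hS hα)
    exact Finset.mem_Icc.2 ⟨by omega, le_rfl⟩
  have hmem : ∀ e ∈ G.edgeSet, e ≠ s(a, b) → e ∈ (G.deleteEdges {s(a, b)}).edgeSet := by
    intro e he hne
    rw [SimpleGraph.edgeSet_deleteEdges]
    exact ⟨he, hne⟩
  have hproper : ∀ e₁ ∈ G.edgeSet, ∀ e₂ ∈ G.edgeSet, e₁ ≠ s(a, b) → e₂ ≠ s(a, b) → e₁ ≠ e₂ →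
      (∃ x, x ∈ e₁ ∧ x ∈ e₂) → h e₁ ≠ h e₂ := fun e₁ h1 e₂ h2 n1 n2 =>
    hh.2 e₁ (hmem _ h1 n1) e₂ (hmem _ h2 n2)
  set X : Set (Sym2 V) := {e | e ≠ s(b, c) ∧ (e = s(a, b) ∨ h e ∈ S)} with hX
  -- the new edge of color `t` meets no other edge of that color outside `D`
  have hnt : ∀ e ∈ G.edgeSet, e ∉ D → e ≠ s(a, b) → e ≠ s(b, c) →
      (∃ x, x ∈ s(b, c) ∧ x ∈ e) → h e ≠ t := by
    rintro e he heD hea heb ⟨x, hx1, hx2⟩ heq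
    rw [Sym2.mem_iff] at hx1
    rcases hx1 with rfl | rfl
    · exact hb e (hmem e he hea) hx2 heq
    · exact heD (hD e he hea hx2 heq)
  have hdel : ∀ e, e ∈ (G.deleteEdges D).edgeSet ↔ e ∈ G.edgeSet ∧ e ∉ D := by
    intro e; rw [SimpleGraph.edgeSet_deleteEdges]; rfl
  have hinc : ∀ v, b = v ∨ c = v → ∀ e₁ ∈ (G.deleteEdges D).edgeSet ∩ X, v ∈ e₁ →
      e₁ ≠ s(a, b) → h e₁ ≠ h s(b, c) := by
    intro v hv e₁ h1 hv1 hn1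
    refine hproper e₁ ((hdel _).1 h1.1).1 _ hbc hn1 hne h1.2.1 ⟨v, hv1, ?_⟩
    rw [Sym2.mem_iff]; tauto
  refine (exists_recolor (G' := G.deleteEdges D) (t := t) hA
    (SimpleGraph.deleteEdges_le D) S hSc hS' X (Function.update h s(b, c) t) ?_ ?_ ?_).elim ?_
  rotate_right
  · rintro φ ⟨hφ1, hφ2, hφ3⟩
    refine ⟨φ, hφ1, ?_, ?_, ?_, ?_⟩
    · rw [hφ3 _ (fun hc => hc.1 rfl)]; simp
    · exact hφ2 _ ((hdel _).2 ⟨hab, hDe⟩) ⟨hne.symm, Or.inl rfl⟩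
    · intro e he heD hea heb
      by_cases hs : h e ∈ S
      · exact Or.inr ⟨hφ2 e ((hdel _).2 ⟨he, heD⟩) ⟨heb, Or.inr hs⟩, hs⟩
      · left
        rw [hφ3 e (fun hc => hc.2.elim hea hs), Function.update_of_ne heb]
    · -- fewer than `q` edges at `c` are colored with `S`
      by_contra hcon
      push Not at hcon
      have hsub : (S : Set ℕ) ⊆ φ '' {e | e ∈ (G.deleteEdges D).edgeSet ∩ X ∧ c ∈ e} := by
        intro β hβ
        have := hcon β hβ
        unfold MissingAt at this
        push Not at this
        obtain ⟨e, he, hce, heq⟩ := this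
        refine ⟨e, ⟨⟨he, ?_⟩, hce⟩, heq⟩
        by_contra heX
        rw [hφ3 e heX] at heq
        by_cases heb : e = s(b, c)
        · subst heb
          rw [Function.update_self] at heq
          exact htS (heq ▸ hβ)
        · rw [Function.update_of_ne heb] at heq
          exact heX ⟨heb, Or.inr (heq ▸ hβ)⟩
      have h1 := Set.ncard_le_ncard hsub (Set.toFinite _)
      rw [Set.ncard_coe_finset] at h1
      have h2 := Set.ncard_image_le (f := φ)
        (Set.toFinite {e | e ∈ (G.deleteEdges D).edgeSet ∩ X ∧ c ∈ e})
      have h3 : {e | e ∈ (G.deleteEdges D).edgeSet ∩ X ∧ c ∈ e}.ncard ≤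
          (S.erase (h s(b, c))).card := by
        apply ncard_incident_le _ _ h c s(a, b)
        · intro e₁ h1 e₂ h2 n1 n2 hne' hv1 hv2
          exact hproper e₁ ((hdel _).1 h1.1).1 e₂ ((hdel _).1 h2.1).1 n1 n2 hne' ⟨c, hv1, hv2⟩
        · intro e₁ h1 hv1 n1
          exact Finset.mem_erase.2 ⟨hinc c (Or.inr rfl) e₁ h1 hv1 n1, h1.2.2.resolve_left n1⟩
        · intro hc; exact absurd hc hcab
      rw [Finset.card_erase_of_mem hn] at h3
      omega
  · have hm : ∀ e ∈ ((G.deleteEdges D).deleteEdges X).edgeSet, e ∈ G.edgeSet ∧ e ∉ D ∧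
        e ≠ s(a, b) := by
      intro e he
      rw [SimpleGraph.edgeSet_deleteEdges] at he
      have := (hdel _).1 he.1
      refine ⟨this.1, this.2, ?_⟩
      rintro rfl
      exact he.2 ⟨hne.symm, Or.inl rfl⟩
    refine ⟨?_, ?_⟩
    · intro e he
      obtain ⟨h1, h2, h3⟩ := hm e he
      by_cases heb : e = s(b, c)
      · subst heb; rw [Function.update_self]; exact ht1
      · rw [Function.update_of_ne heb]; exact hh.1 e (hmem e h1 h3)
    · intro e₁ he₁ e₂ he₂ hne' hx
      obtain ⟨h1, h2, h3⟩ := hm e₁ he₁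
      obtain ⟨h4, h5, h6⟩ := hm e₂ he₂
      by_cases heb₁ : e₁ = s(b, c)
      · subst heb₁
        rw [Function.update_self, Function.update_of_ne hne'.symm]
        exact (hnt e₂ h4 h5 h6 hne'.symm hx).symm
      · by_cases heb₂ : e₂ = s(b, c)
        · subst heb₂
          rw [Function.update_self, Function.update_of_ne heb₁]
          exact hnt e₁ h1 h2 h3 heb₁ (by obtain ⟨x, h, h'⟩ := hx; exact ⟨x, h', h⟩)
        · rw [Function.update_of_ne heb₁, Function.update_of_ne heb₂]
          exact hproper e₁ h1 e₂ h4 h3 h6 hne' hx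
  · intro e he heX
    by_cases heb : e = s(b, c)
    · subst heb; rw [Function.update_self]; exact htS
    · rw [Function.update_of_ne heb]
      exact fun hs => heX ⟨heb, Or.inr hs⟩
  · intro v
    rw [← hSc]
    apply ncard_incident_le _ S h v s(a, b)
    · intro e₁ h1 e₂ h2 n1 n2 hne' hv1 hv2
      exact hproper e₁ ((hdel _).1 h1.1).1 e₂ ((hdel _).1 h2.1).1 n1 n2 hne' ⟨v, hv1, hv2⟩
    · intro e₁ h1 _ n1
      exact h1.2.2.resolve_left n1
    · intro hv _
      rw [Sym2.mem_iff] at hv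
      rcases hv with rfl | rfl
      · exact ⟨α, hα, fun e₁ h1 hv1 n1 => ha e₁ (hmem _ ((hdel _).1 h1.1).1 n1) hv1⟩
      · exact ⟨h s(v, c), hn, hinc v (Or.inl rfl)⟩

/-- The shift of `exists_shift` for a coloring `h` with a completion `φ`: after passing to another
completion, whose palette contains `h n`, the shifted coloring agrees outside `S ∪ {t}` with a
coloring `ψ` of `G` equivalent to `φ`. That palette must contain `α`, `d` and `h n`, and it differs
from the palette of `φ` in at most one color; this is possible because `q ≥ 3`. -/
lemma IsCompletion.exists_step [Fintype V] {q t : ℕ} (hq : 3 ≤ q) {G : SimpleGraph V}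
    (hA : MemA q G) {a b c : V}
    (hab : s(a, b) ∈ G.edgeSet) (hbc : s(b, c) ∈ G.edgeSet) (hac : a ≠ c)
    {h φ : Sym2 V → ℕ} (hh : IsProperEdgeColoring (G.deleteEdges {s(a, b)}) t h)
    (hφ : IsCompletion G q t a b h φ) (hn : h s(b, c) ≠ t)
    (hb : MissingAt (G.deleteEdges {s(a, b)}) h t b)
    (D : Set (Sym2 V)) (hDe : s(a, b) ∉ D)
    (hD : ∀ e ∈ G.edgeSet, e ≠ s(a, b) → c ∈ e → h e = t → e ∈ D) :
    ∃ (h₁ ψ : Sym2 V → ℕ) (S : Finset ℕ), S ⊆ Finset.Icc 1 (t - 1) ∧ S.card = q ∧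
      IsProperEdgeColoring (G.deleteEdges D) t h₁ ∧
      h₁ s(b, c) = t ∧ h₁ s(a, b) ∈ S ∧
      (∀ e ∈ G.edgeSet, e ∉ D → e ≠ s(a, b) → e ≠ s(b, c) → AgreeOff S (h₁ e) (h e)) ∧
      (∃ β ∈ S, MissingAt (G.deleteEdges D) h₁ β c) ∧
      IsProperEdgeColoring G t ψ ∧ NEquiv G t (q + 1) ψ φ ∧
      (∀ e ∈ G.edgeSet, e ∉ D → AgreeOff (insert t S) (h₁ e) (ψ e)) ∧
      (∀ e ∈ G.edgeSet, h e = t → e ≠ s(a, b) → ψ e ∈ insert t S) := by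
  classical
  obtain ⟨h', α, d, S', hS', hSc', hα, hd, hαd, h'p, h'o, ha, h'd, hφp, hφe, hφo⟩ := hφ
  have hne : s(b, c) ≠ s(a, b) := by
    intro heq
    rw [Sym2.eq_swap, Sym2.congr_left] at heq
    exact hac heq.symm
  have hnI : h s(b, c) ∈ Finset.Icc 1 (t - 1) := by
    have := Finset.mem_Icc.1 (hh.1 s(b, c) (by
      rw [SimpleGraph.edgeSet_deleteEdges]; exact ⟨hbc, hne⟩))
    exact Finset.mem_Icc.2 ⟨this.1, by omega⟩
  obtain ⟨S, h3S, hSsub, hSc⟩ : ∃ S : Finset ℕ, {α, d, h s(b, c)} ⊆ S ∧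
      S ⊆ insert (h s(b, c)) S' ∧ S.card = q := by
    apply Finset.exists_subsuperset_card_eq
    · intro i hi
      simp only [Finset.mem_insert, Finset.mem_singleton] at hi ⊢
      rcases hi with rfl | rfl | rfl
      · exact Or.inr hα
      · exact Or.inr hd
      · exact Or.inl rfl
    · exact Finset.card_le_three.trans hq
    · rw [← hSc']; exact Finset.card_le_card (Finset.subset_insert _ _)
  have hα2 : α ∈ S := h3S (by simp)
  have hd2 : d ∈ S := h3S (by simp)
  have hn2 : h s(b, c) ∈ S := h3S (by simp)
  have hSI : S ⊆ Finset.Icc 1 (t - 1) := by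
    intro i hi
    rcases Finset.mem_insert.1 (hSsub hi) with rfl | hi
    · exact hnI
    · exact hS' hi
  have hSI' : S ⊆ Finset.Icc 1 t := by
    intro i hi
    have := Finset.mem_Icc.1 (hSI hi)
    exact Finset.mem_Icc.2 ⟨this.1, by omega⟩
  have hαt : α ≠ t := by have := Finset.mem_Icc.1 (hSI hα2); omega
  have hdt : ({d, t} : Finset ℕ) ⊆ insert t S := by
    intro i hi
    simp only [Finset.mem_insert, Finset.mem_singleton] at hi ⊢
    rcases hi with rfl | rfl
    · exact Or.inr hd2
    · exact Or.inl rfl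
  obtain ⟨ψ, hψ, hψe, hψo⟩ := exists_completion hA S hSc hSI' h' h'p hα2 hd2
    (ha.of_agreeOff h'o hαd hαt) h'd
  obtain ⟨h₁, k1, k2, k3, k4, k5⟩ := exists_shift hq hA S hSc hSI hab hbc hac h hh hα2 hn2 ha hb
    D hDe hD
  -- off `e`, the three colorings `ψ`, `h'` and `h` agree outside `S ∪ {t}`
  have hψh : ∀ e ∈ G.edgeSet, e ≠ s(a, b) → AgreeOff (insert t S) (ψ e) (h e) := fun e he hee =>
    ((hψo e he hee).mono (Finset.subset_insert _ _)).trans ((h'o e).mono hdt)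
  refine ⟨h₁, ψ, S, hSI, hSc, k1, k2, k3, k4, k5, hψ, ?_, ?_, ?_⟩
  · apply nEquiv_of_agreeOff (insert (h s(b, c)) S')
      (by have := Finset.card_insert_le (h s(b, c)) S'; omega) hψ hφp
    intro e he
    by_cases hee : e = s(a, b)
    · subst hee
      exact Or.inr ⟨hSsub (hψe hab), Finset.mem_insert_of_mem hφe⟩
    · exact ((hψo e he hee).mono hSsub).trans
        ((hφo e he hee).mono (Finset.subset_insert _ _)).symm
  · intro e he heD
    by_cases hee : e = s(a, b)
    · subst hee
      exact Or.inr ⟨Finset.mem_insert_of_mem k3, Finset.mem_insert_of_mem (hψe hab)⟩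
    · by_cases heb : e = s(b, c)
      · subst heb
        exact Or.inr ⟨by rw [k2]; exact Finset.mem_insert_self _ _,
          (hψh _ he hee).mem_left (Finset.mem_insert_of_mem hn2)⟩
      · exact ((k4 e he heD hee heb).mono (Finset.subset_insert _ _)).trans (hψh e he hee).symm
  · intro e he het hee
    exact (hψh e he hee).mem_left (by rw [het]; exact Finset.mem_insert_self _ _)

/-! ### Switching an alternating path of even length -/

/-- The color class `t` after the first `m` pairs of edges of the path `v` have been switched:
among the first `2 * m` edges of the path, exactly those of odd index have color `t`. -/
def Switched (f : Sym2 V → ℕ) (t : ℕ) (v : ℕ → V) (m : ℕ) (e : Sym2 V) : Prop :=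
  (f e = t ∧ ∀ i < m, e ≠ s(v (2 * i), v (2 * i + 1))) ∨
    ∃ i < m, e = s(v (2 * i + 1), v (2 * i + 2))

/-- `v 0, …, v (2 * k)` are the vertices of a path of `G` whose edges of even index are exactly
those of color `t`, and whose last vertex is not incident with a further edge of color `t`. -/
structure IsAltSeq (G : SimpleGraph V) (t : ℕ) (f : Sym2 V → ℕ) (v : ℕ → V) (k : ℕ) : Prop where
  inj : ∀ i j, i ≤ 2 * k → j ≤ 2 * k → v i = v j → i = j
  mem : ∀ i < 2 * k, s(v i, v (i + 1)) ∈ G.edgeSet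
  even : ∀ i < k, f s(v (2 * i), v (2 * i + 1)) = t
  odd : ∀ i < k, f s(v (2 * i + 1), v (2 * i + 2)) ≠ t
  last : MissingAt G f t (v (2 * k))

lemma IsAltSeq.odd_ne_even {G : SimpleGraph V} {t k : ℕ} {f : Sym2 V → ℕ} {v : ℕ → V}
    (hv : IsAltSeq G t f v k) {i j : ℕ} (hi : i < k) (hj : j < k) :
    s(v (2 * i + 1), v (2 * i + 2)) ≠ s(v (2 * j), v (2 * j + 1)) := by
  intro h
  exact hv.odd i hi (by rw [h]; exact hv.even j hj)

lemma IsAltSeq.not_switched {G : SimpleGraph V} {t k : ℕ} {f : Sym2 V → ℕ} {v : ℕ → V}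
    (hf : IsProperEdgeColoring G t f) (hv : IsAltSeq G t f v k) {m : ℕ} (hm : m < k)
    {e : Sym2 V} (he : e ∈ G.edgeSet) (hne : e ≠ s(v (2 * m), v (2 * m + 1)))
    (hx : v (2 * m + 1) ∈ e) : ¬ Switched f t v m e := by
  rintro (⟨h1, -⟩ | ⟨i, hi, rfl⟩)
  · exact hf.2 e he _ (hv.mem (2 * m) (by omega)) hne ⟨_, hx, Sym2.mem_mk_right _ _⟩
      (h1.trans (hv.even m hm).symm)
  · rw [Sym2.mem_iff] at hx
    rcases hx with h | h
    · have := hv.inj _ _ (by omega) (by omega) h; omega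
    · have := hv.inj _ _ (by omega) (by omega) h; omega

lemma IsAltSeq.color_of_switched {G : SimpleGraph V} {t k : ℕ} {f : Sym2 V → ℕ} {v : ℕ → V}
    (hv : IsAltSeq G t f v k) {m : ℕ} (hm : m < k) {e : Sym2 V} (hx : v (2 * m + 2) ∈ e)
    (hs : Switched f t v m e) : f e = t := by
  rcases hs with ⟨h1, -⟩ | ⟨i, hi, rfl⟩
  · exact h1
  · rw [Sym2.mem_iff] at hx
    rcases hx with h | h
    · have := hv.inj _ _ (by omega) (by omega) h; omega
    · have := hv.inj _ _ (by omega) (by omega) h; omega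

lemma IsAltSeq.switched_succ {G : SimpleGraph V} {t k : ℕ} {f : Sym2 V → ℕ} {v : ℕ → V}
    (hv : IsAltSeq G t f v k) {m : ℕ} (hm : m < k) (e : Sym2 V) :
    Switched f t v (m + 1) e ↔ e = s(v (2 * m + 1), v (2 * m + 2)) ∨
      (e ≠ s(v (2 * m), v (2 * m + 1)) ∧ Switched f t v m e) := by
  unfold Switched
  constructor
  · rintro (⟨h1, h2⟩ | ⟨i, hi, rfl⟩)
    · exact Or.inr ⟨h2 m (by omega), Or.inl ⟨h1, fun i hi => h2 i (by omega)⟩⟩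
    · rcases Nat.lt_succ_iff_lt_or_eq.1 hi with h | rfl
      · exact Or.inr ⟨hv.odd_ne_even (by omega) hm, Or.inr ⟨i, h, rfl⟩⟩
      · exact Or.inl rfl
  · rintro (rfl | ⟨h1, ⟨h2, h3⟩ | ⟨i, hi, rfl⟩⟩)
    · exact Or.inr ⟨m, by omega, rfl⟩
    · refine Or.inl ⟨h2, fun i hi => ?_⟩
      rcases Nat.lt_succ_iff_lt_or_eq.1 hi with h | rfl
      · exact h3 i h
      · exact h1
    · exact Or.inr ⟨i, by omega, rfl⟩

/-- The state of the switching process when `m` pairs of edges are done: the edge of index `2 * m`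
is uncolored, the color class `t` is the switched one, and some completion of the coloring is
equivalent to `f`. -/
def SwitchState (G : SimpleGraph V) (q t : ℕ) (f : Sym2 V → ℕ) (v : ℕ → V) (m : ℕ) : Prop :=
  ∃ h φ : Sym2 V → ℕ,
    IsProperEdgeColoring (G.deleteEdges {s(v (2 * m), v (2 * m + 1))}) t h ∧
    IsCompletion G q t (v (2 * m)) (v (2 * m + 1)) h φ ∧ NEquiv G t (q + 1) φ f ∧
    ∀ e ∈ G.edgeSet, e ≠ s(v (2 * m), v (2 * m + 1)) → (h e = t ↔ Switched f t v m e)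

/-- Switching one more pair of edges. The edges in `D`, which contains those of color `t` at
`v (2 * m + 2)`, become uncolored. It is used with `D` consisting of the edge of index `2 * m + 2`,
and with `D = ∅` at the end of the path. -/
lemma SwitchState.exists_step [Fintype V] {q t k : ℕ} (hq : 3 ≤ q) {G : SimpleGraph V}
    (hA : MemA q G) {f : Sym2 V → ℕ} (hf : IsProperEdgeColoring G t f) {v : ℕ → V}
    (hv : IsAltSeq G t f v k) {m : ℕ} (hm : m < k) (hs : SwitchState G q t f v m)
    (D : Set (Sym2 V)) (hDe : s(v (2 * m), v (2 * m + 1)) ∉ D)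
    (hD : ∀ e ∈ G.edgeSet, v (2 * m + 2) ∈ e → f e = t → e ∈ D) :
    ∃ (h₁ ψ : Sym2 V → ℕ) (S : Finset ℕ), S ⊆ Finset.Icc 1 (t - 1) ∧ S.card = q ∧
      IsProperEdgeColoring (G.deleteEdges D) t h₁ ∧
      (∃ β ∈ S, MissingAt (G.deleteEdges D) h₁ β (v (2 * m + 2))) ∧
      IsProperEdgeColoring G t ψ ∧ NEquiv G t (q + 1) ψ f ∧
      (∀ e ∈ G.edgeSet, e ∉ D → AgreeOff (insert t S) (h₁ e) (ψ e)) ∧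
      (∀ e ∈ G.edgeSet, e ≠ s(v (2 * m), v (2 * m + 1)) → Switched f t v m e →
        ψ e ∈ insert t S) ∧
      ∀ e ∈ G.edgeSet, e ∉ D → (h₁ e = t ↔ Switched f t v (m + 1) e) := by
  obtain ⟨h, φ, hh, hφ, hφf, hT⟩ := hs
  have hab := hv.mem (2 * m) (by omega)
  have hbc := hv.mem (2 * m + 1) (by omega)
  have hne := hv.odd_ne_even hm hm
  have hac : v (2 * m) ≠ v (2 * m + 2) := by
    intro h; have := hv.inj _ _ (by omega) (by omega) h; omega
  have hb : MissingAt (G.deleteEdges {s(v (2 * m), v (2 * m + 1))}) h t (v (2 * m + 1)) := by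
    intro e he hx heq
    rw [SimpleGraph.edgeSet_deleteEdges] at he
    exact hv.not_switched hf hm he.1 he.2 hx ((hT e he.1 he.2).1 heq)
  have hn : h s(v (2 * m + 1), v (2 * m + 2)) ≠ t := fun heq =>
    hv.not_switched hf hm hbc hne (Sym2.mem_mk_left _ _) ((hT _ hbc hne).1 heq)
  obtain ⟨h₁, ψ, S, hSI, hSc, k1, k2, k3, k4, k5, k6, k7, k8, k9⟩ :=
    hφ.exists_step hq hA hab hbc hac hh hn hb D hDe (fun e he hee hx heq =>
      hD e he hx (hv.color_of_switched hm hx ((hT e he hee).1 heq)))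
  have htS : t ∉ S := by
    intro hc
    have := Finset.mem_Icc.1 (hSI hc); omega
  refine ⟨h₁, ψ, S, hSI, hSc, k1, k5, k6, k7.trans' hφf, k8,
    fun e he hee hsw => k9 e he ((hT e he hee).2 hsw) hee, ?_⟩
  intro e he heD
  rw [hv.switched_succ hm]
  by_cases heb : e = s(v (2 * m + 1), v (2 * m + 2))
  · subst heb
    simp [k2]
  · by_cases hee : e = s(v (2 * m), v (2 * m + 1))
    · subst hee
      have : h₁ s(v (2 * m), v (2 * m + 1)) ≠ t := fun heq => htS (heq ▸ k3)
      simp [this, heb]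
    · have hag := k4 e he heD hee heb
      rw [or_iff_right heb, and_iff_right hee, ← hT e he hee]
      constructor
      · intro heq
        rw [← heq] at htS ⊢
        exact hag.symm.not_mem htS
      · intro heq
        rw [← heq] at htS ⊢
        exact hag.not_mem htS

lemma switchState [Fintype V] {q t k : ℕ} (hq : 3 ≤ q) (hqt : q + 1 ≤ t) {G : SimpleGraph V}
    (hA : MemA q G) {f : Sym2 V → ℕ} (hf : IsProperEdgeColoring G t f) {v : ℕ → V}
    (hv : IsAltSeq G t f v k) {α : ℕ} (hα : α ∈ Finset.Icc 1 (t - 1))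
    (hm0 : MissingAt G f α (v 0)) (m : ℕ) (hm : m < k) : SwitchState G q t f v m := by
  induction m with
  | zero =>
    obtain ⟨S, hαS, hSI, hSc⟩ : ∃ S : Finset ℕ, {α} ⊆ S ∧ S ⊆ Finset.Icc 1 (t - 1) ∧
        S.card = q := by
      apply Finset.exists_subsuperset_card_eq
      · simpa using hα
      · simp; omega
      · simp; omega
    have hle : ∀ e ∈ (G.deleteEdges {s(v (2 * 0), v (2 * 0 + 1))}).edgeSet, e ∈ G.edgeSet := by
      intro e he
      rw [SimpleGraph.edgeSet_deleteEdges] at he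
      exact he.1
    have hp : IsProperEdgeColoring (G.deleteEdges {s(v (2 * 0), v (2 * 0 + 1))}) t f :=
      ⟨fun e he => hf.1 e (hle e he), fun e₁ h1 e₂ h2 => hf.2 e₁ (hle _ h1) e₂ (hle _ h2)⟩
    obtain ⟨φ, h1, h2⟩ := exists_isCompletion hq hA S hSc hSI (hv.mem (2 * 0) (by omega)) f f hp
      (hαS (Finset.mem_singleton_self α)) (fun e he => hm0 e (hle e he))
      (by
        intro e he hx heq
        rw [SimpleGraph.edgeSet_deleteEdges] at he
        exact hv.not_switched hf hm he.1 he.2 hx (Or.inl ⟨heq, by simp⟩))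
      hf (by rw [hv.even 0 hm]; exact Finset.mem_insert_self _ _) (fun e _ _ => Or.inl rfl)
    exact ⟨f, φ, hp, h1, h2, fun e _ _ => by simp [Switched]⟩
  | succ m ih =>
    have hm' : m < k := by omega
    have hne : s(v (2 * (m + 1)), v (2 * (m + 1) + 1)) ≠ s(v (2 * m), v (2 * m + 1)) := by
      intro h
      have h' := Sym2.mem_mk_left (v (2 * (m + 1))) (v (2 * (m + 1) + 1))
      rw [h, Sym2.mem_iff] at h'
      rcases h' with h' | h'
      · have := hv.inj _ _ (by omega) (by omega) h'; omega
      · have := hv.inj _ _ (by omega) (by omega) h'; omega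
    have hmem := hv.mem (2 * (m + 1)) (by omega)
    obtain ⟨h₁, ψ, S, hSI, hSc, k1, ⟨β, hβ, hβm⟩, k6, k7, k8, k9, k10⟩ :=
      (ih hm').exists_step hq hA hf hv hm' {s(v (2 * (m + 1)), v (2 * (m + 1) + 1))}
        hne.symm (by
          intro e he hx heq
          by_contra hc
          exact hf.2 e he _ hmem hc ⟨_, hx, Sym2.mem_mk_left _ _⟩ (heq.trans (hv.even _ hm).symm))
    obtain ⟨φ, h1, h2⟩ := exists_isCompletion hq hA S hSc hSI hmem h₁ ψ k1 hβ hβm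
      (by
        intro e he hx heq
        rw [SimpleGraph.edgeSet_deleteEdges] at he
        exact hv.not_switched hf hm he.1 he.2 hx ((k10 e he.1 he.2).1 heq))
      k6 (by
        refine k9 _ hmem hne (Or.inl ⟨hv.even _ hm, fun i hi h => ?_⟩)
        have h' := Sym2.mem_mk_left (v (2 * (m + 1))) (v (2 * (m + 1) + 1))
        rw [h, Sym2.mem_iff] at h'
        rcases h' with h' | h'
        · have := hv.inj _ _ (by omega) (by omega) h'; omega
        · have := hv.inj _ _ (by omega) (by omega) h'; omega) k8
    exact ⟨h₁, φ, k1, h1, h2.trans' k7, k10⟩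

/-- The whole path can be switched. No edge of color `t` interferes with the last step. -/
lemma exists_switched [Fintype V] {q t k : ℕ} (hq : 3 ≤ q) (hqt : q + 1 ≤ t) {G : SimpleGraph V}
    (hA : MemA q G) {f : Sym2 V → ℕ} (hf : IsProperEdgeColoring G t f) {v : ℕ → V}
    (hv : IsAltSeq G t f v k) {α : ℕ} (hα : α ∈ Finset.Icc 1 (t - 1))
    (hm0 : MissingAt G f α (v 0)) (hk : 0 < k) :
    ∃ fb, IsProperEdgeColoring G t fb ∧ NEquiv G t (q + 1) fb f ∧
      ∀ e ∈ G.edgeSet, fb e = t ↔ Switched f t v k e := by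
  obtain ⟨m, rfl⟩ : ∃ m, k = m + 1 := ⟨k - 1, by omega⟩
  obtain ⟨h₁, ψ, S, -, hSc, k1, -, k6, k7, k8, -, k10⟩ :=
    (switchState hq hqt hA hf hv hα hm0 m (by omega)).exists_step hq hA hf hv (by omega) ∅
      (by simp) (fun e he hx heq => absurd heq (hv.last e he hx))
  rw [SimpleGraph.deleteEdges_empty] at k1
  refine ⟨h₁, k1, NEquiv.trans' ?_ k7, fun e he => k10 e he (by simp)⟩
  exact nEquiv_of_agreeOff (insert t S) (by have := Finset.card_insert_le t S; omega) k1 k6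
    fun e he => k8 e he (by simp)

/-! ### Components of `G(f,g,t)` -/

/-- Since `g` misses `t` at `u`, the degree of `u` is less than `t`, so that the colors of the edges
at `u` under `f`, one of which is `t`, cannot be all of `1, …, t`. -/
lemma exists_missing [Fintype V] {t : ℕ} {G : SimpleGraph V} {f g : Sym2 V → ℕ}
    (hf : IsProperEdgeColoring G t f) (hg : IsProperEdgeColoring G t g) {u : V} (ht : 1 ≤ t)
    (hgu : MissingAt G g t u) {e₀ : Sym2 V} (he₀ : e₀ ∈ G.edgeSet) (hu : u ∈ e₀) (hfe : f e₀ = t) :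
    ∃ α ∈ Finset.Icc 1 (t - 1), MissingAt G f α u := by
  by_contra hcon
  push Not at hcon
  set A : Set (Sym2 V) := {e | e ∈ G.edgeSet ∧ u ∈ e} with hA
  have h1 : A.ncard ≤ (Finset.Icc 1 (t - 1)).card := by
    rw [← Set.ncard_coe_finset]
    apply Set.ncard_le_ncard_of_injOn g
    · rintro e ⟨he, hue⟩
      have h2 := Finset.mem_Icc.1 (hg.1 e he)
      have h3 := hgu e he hue
      exact Finset.mem_coe.2 (Finset.mem_Icc.2 ⟨h2.1, by omega⟩)
    · rintro e₁ ⟨h2, h3⟩ e₂ ⟨h4, h5⟩ heq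
      by_contra hne
      exact hg.2 e₁ h2 e₂ h4 hne ⟨u, h3, h5⟩ heq
  have h2 : ((Finset.Icc 1 t : Finset ℕ) : Set ℕ) ⊆ f '' A := by
    intro i hi
    have hi := Finset.mem_Icc.1 (Finset.mem_coe.1 hi)
    rcases eq_or_ne i t with rfl | hit
    · exact ⟨e₀, ⟨he₀, hu⟩, hfe⟩
    · have := hcon i (Finset.mem_Icc.2 ⟨hi.1, by omega⟩)
      unfold MissingAt at this
      push Not at this
      obtain ⟨e, he, hue, heq⟩ := this
      exact ⟨e, ⟨he, hue⟩, heq⟩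
  have h3 := (Set.ncard_le_ncard h2 (Set.toFinite _)).trans (Set.ncard_image_le (Set.toFinite A))
  rw [Set.ncard_coe_finset] at h3
  simp only [Nat.card_Icc] at h1 h3
  omega

lemma mem_diffGraph {G : SimpleGraph V} {t : ℕ} {f g : Sym2 V → ℕ} {e : Sym2 V} :
    e ∈ (diffGraph G t f g).edgeSet ↔
      e ∈ G.edgeSet ∧ ((f e = t ∧ g e ≠ t) ∨ (f e ≠ t ∧ g e = t)) := by
  rw [diffGraph, SimpleGraph.edgeSet_fromEdgeSet, Set.mem_sdiff, Set.mem_symmDiff]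
  simp only [colorClass, Set.mem_ofPred_eq]
  constructor
  · tauto
  · intro h
    have : ¬ e.IsDiag := G.not_isDiag_of_mem_edgeSet h.1
    exact ⟨by tauto, this⟩

lemma IsComponentWalk.eq_first_edge {G : SimpleGraph V} {t : ℕ} {f g : Sym2 V → ℕ} {u x : V}
    {p : (diffGraph G t f g).Walk u x} (hp : p.IsPath) (hcomp : IsComponentWalk p) {e : Sym2 V}
    (hu : u ∈ e) (he : e ∈ (diffGraph G t f g).edgeSet) : e = s(p.getVert 0, p.getVert 1) := by
  obtain ⟨b, rfl⟩ := hu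
  rw [p.getVert_zero, hp.eq_snd_of_mem_edges (hcomp u p.start_mem_support b he)]

lemma IsComponentWalk.reverse {G : SimpleGraph V} {u x : V} {p : G.Walk u x}
    (hcomp : IsComponentWalk p) : IsComponentWalk p.reverse := by
  intro a ha b hab
  rw [Walk.support_reverse, List.mem_reverse] at ha
  rw [Walk.edges_reverse, List.mem_reverse]
  exact hcomp a ha b hab

/-- Consecutive edges of a path in `G(f,g,t)` alternate between the two color classes. -/
lemma diffGraph_alternates {G : SimpleGraph V} {t : ℕ} {f g : Sym2 V → ℕ}
    (hf : IsProperEdgeColoring G t f) (hg : IsProperEdgeColoring G t g) {u x : V}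
    {p : (diffGraph G t f g).Walk u x} (hp : p.IsPath) {i : ℕ} (hi : i + 1 < p.length) :
    f s(p.getVert i, p.getVert (i + 1)) = t ↔ f s(p.getVert (i + 1), p.getVert (i + 2)) ≠ t := by
  have h1 := mem_diffGraph.1 ((diffGraph G t f g).mem_edgeSet.2
    (p.adj_getVert_succ (show i < p.length by omega)))
  have h2 := mem_diffGraph.1 ((diffGraph G t f g).mem_edgeSet.2 (p.adj_getVert_succ hi))
  rw [show i + 1 + 1 = i + 2 from rfl] at h2
  have hne : s(p.getVert i, p.getVert (i + 1)) ≠ s(p.getVert (i + 1), p.getVert (i + 2)) := by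
    intro h
    rw [Sym2.eq_swap, Sym2.congr_right] at h
    have := hp.getVert_injOn (show i ≤ p.length by omega) (show i + 2 ≤ p.length by omega) h
    omega
  have hx : ∃ y, y ∈ s(p.getVert i, p.getVert (i + 1)) ∧
      y ∈ s(p.getVert (i + 1), p.getVert (i + 2)) :=
    ⟨_, Sym2.mem_mk_right _ _, Sym2.mem_mk_left _ _⟩
  have h3 := hf.2 _ h1.1 _ h2.1 hne hx
  have h4 := hg.2 _ h1.1 _ h2.1 hne hx
  constructor
  · intro h h'
    exact h3 (h.trans h'.symm)
  · intro h
    by_contra h'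
    have h5 := (h1.2.resolve_left fun hc => h' hc.1).2
    have h6 := (h2.2.resolve_left fun hc => h hc.1).2
    exact h4 (h5.trans h6.symm)

lemma color_getVert {G : SimpleGraph V} {t : ℕ} {f g : Sym2 V → ℕ}
    (hf : IsProperEdgeColoring G t f) (hg : IsProperEdgeColoring G t g) {u x : V}
    {p : (diffGraph G t f g).Walk u x} (hp : p.IsPath)
    (h0 : f s(p.getVert 0, p.getVert 1) = t) (i : ℕ) (hi : i < p.length) :
    f s(p.getVert i, p.getVert (i + 1)) = t ↔ Even i := by
  induction i with
  | zero => exact iff_of_true h0 Even.zero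
  | succ i ih =>
    have h1 := ih (by omega)
    have h2 := diffGraph_alternates hf hg hp hi
    rw [show i + 1 + 1 = i + 2 from rfl, Nat.even_add_one]
    tauto

/-- If the first edge of the path has color `t` under `f`, the path can be switched. -/
lemma exists_better_of_first [Fintype V] {q t : ℕ} (hq : 3 ≤ q) (hqt : q + 1 ≤ t)
    {G : SimpleGraph V} (hA : MemA q G) {f g : Sym2 V → ℕ}
    (hf : IsProperEdgeColoring G t f) (hg : IsProperEdgeColoring G t g) {u x : V}
    {p : (diffGraph G t f g).Walk u x} (hp : p.IsPath) (hpos : 0 < p.length)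
    (heven : Even p.length) (hcomp : IsComponentWalk p)
    (h0 : f s(p.getVert 0, p.getVert 1) = t) :
    ∃ fb, IsProperEdgeColoring G t fb ∧ NEquiv G t (q + 1) fb f ∧
      (colorClass G f t ∩ colorClass G g t).ncard <
        (colorClass G fb t ∩ colorClass G g t).ncard := by
  obtain ⟨k, hk⟩ := heven
  have hcol := color_getVert hf hg hp h0
  have hmem : ∀ i < p.length, s(p.getVert i, p.getVert (i + 1)) ∈ G.edgeSet ∧
      ((f s(p.getVert i, p.getVert (i + 1)) = t ∧ g s(p.getVert i, p.getVert (i + 1)) ≠ t) ∨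
      (f s(p.getVert i, p.getVert (i + 1)) ≠ t ∧ g s(p.getVert i, p.getVert (i + 1)) = t)) :=
    fun i hi => mem_diffGraph.1 ((diffGraph G t f g).mem_edgeSet.2 (p.adj_getVert_succ hi))
  have hev : ∀ i < k, f s(p.getVert (2 * i), p.getVert (2 * i + 1)) = t := fun i hi =>
    (hcol (2 * i) (by omega)).2 (even_two_mul i)
  have hod : ∀ i < k, f s(p.getVert (2 * i + 1), p.getVert (2 * i + 2)) ≠ t := fun i hi h =>
    Nat.not_even_two_mul_add_one i ((hcol (2 * i + 1) (by omega)).1 h)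
  have hlen : 2 * k = p.length := by omega
  -- an edge of color `t` under `f` at the end vertex `x` would belong to the component
  have hv : IsAltSeq G t f p.getVert k := by
    refine ⟨fun i j hi hj h => hp.getVert_injOn (hlen ▸ hi) (hlen ▸ hj) h,
      fun i hi => (hmem i (by omega)).1, hev, hod, ?_⟩
    rw [hlen, p.getVert_length]
    intro e he hx heq
    obtain ⟨k', rfl⟩ : ∃ k', k = k' + 1 := ⟨k - 1, by omega⟩
    have hl := hmem (2 * k' + 1) (by omega)
    have hlo := hod k' (by omega)
    rw [show 2 * k' + 1 + 1 = p.length by omega, p.getVert_length] at hl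
    rw [show 2 * k' + 2 = p.length by omega, p.getVert_length] at hlo
    have hne : e ≠ s(p.getVert (2 * k' + 1), x) := by rintro rfl; exact hlo heq
    have hge : g e ≠ t := fun h => hg.2 e he _ hl.1 hne ⟨x, hx, Sym2.mem_mk_right _ _⟩
      (h.trans (hl.2.resolve_left fun h => hlo h.1).2.symm)
    have := hcomp.reverse.eq_first_edge hp.reverse hx
      (mem_diffGraph.2 ⟨he, Or.inl ⟨heq, hge⟩⟩)
    rw [Walk.getVert_zero, Walk.getVert_reverse, show p.length - 1 = 2 * k' + 1 by omega,
      Sym2.eq_swap] at this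
    exact hne this
  have hm0 := hmem 0 hpos
  rw [zero_add] at hm0
  have hg0 : g s(p.getVert 0, p.getVert 1) ≠ t := (hm0.2.resolve_right fun h => h.1 h0).2
  have hu0 : u ∈ s(p.getVert 0, p.getVert 1) := by rw [p.getVert_zero]; exact Sym2.mem_mk_left _ _
  have hgu : MissingAt G g t u := by
    intro e he hu heq
    have hne : e ≠ s(p.getVert 0, p.getVert 1) := by rintro rfl; exact hg0 heq
    have hfe : f e ≠ t := fun h => hf.2 e he _ hm0.1 hne ⟨u, hu, hu0⟩ (h.trans h0.symm)
    exact hne (hcomp.eq_first_edge hp hu (mem_diffGraph.2 ⟨he, Or.inr ⟨hfe, heq⟩⟩))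
  obtain ⟨α, hα, hαu⟩ := exists_missing hf hg (by omega) hgu hm0.1 hu0 h0
  obtain ⟨fb, h1, h2, h3⟩ := exists_switched hq hqt hA hf hv hα
    (by rw [p.getVert_zero]; exact hαu) (by omega)
  refine ⟨fb, h1, h2, Set.ncard_lt_ncard ?_ (Set.toFinite _)⟩
  refine (Set.ssubset_iff_of_subset ?_).2 ?_
  · rintro e ⟨⟨he, hfe⟩, hge⟩
    refine ⟨⟨he, (h3 e he).2 (Or.inl ⟨hfe, ?_⟩)⟩, hge⟩
    rintro i hi rfl
    rcases (hmem (2 * i) (by omega)).2 with h | h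
    · exact h.2 hge.2
    · exact h.1 hfe
  -- the second edge of the path is gained
  · have hm1 := hmem 1 (by omega)
    have hf1 := hod 0 (by omega)
    refine ⟨s(p.getVert 1, p.getVert 2), ⟨⟨hm1.1, (h3 _ hm1.1).2 (Or.inr ⟨0, by omega, rfl⟩)⟩,
      hm1.1, (hm1.2.resolve_left fun h => hf1 h.1).2⟩, fun h => hf1 h.1.2⟩

/-- Lemma about an even path component of `G(f,g,t)`. -/
theorem exists_better_coloring_of_even_path_component
    {V : Type*} [Fintype V] (q t : ℕ) (hq : 3 ≤ q) (G : SimpleGraph V)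
    (hA : MemA q G) (ht : maxDeg G = t) (htq : q + 2 ≤ t)
    (f g : Sym2 V → ℕ)
    (hf : IsProperEdgeColoring G t f) (hg : IsProperEdgeColoring G t g)
    (hne : ∃ e ∈ G.edgeSet, f e ≠ g e)
    (u x : V) (p : (diffGraph G t f g).Walk u x) (hp : p.IsPath)
    (hpos : 0 < p.length) (heven : Even p.length)
    (hcomp : IsComponentWalk p) :
    ∃ fb, IsProperEdgeColoring G t fb ∧ NEquiv G t (q + 1) fb f ∧
      (colorClass G f t ∩ colorClass G g t).ncard <
        (colorClass G fb t ∩ colorClass G g t).ncard := by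
  by_cases h0 : f s(p.getVert 0, p.getVert 1) = t
  · exact exists_better_of_first hq (by omega) hA hf hg hp hpos heven hcomp h0
  · -- the colors alternate, so the last edge has color `t` and the path is traversed backwards
    have halt : ∀ i < p.length, f s(p.getVert i, p.getVert (i + 1)) = t ↔ ¬ Even i := by
      intro i
      induction i with
      | zero => intro _; simpa using h0
      | succ i ih =>
        intro hi
        have h1 := ih (by omega)
        have h2 := diffGraph_alternates hf hg hp hi
        rw [show i + 1 + 1 = i + 2 from rfl, Nat.even_add_one]
        tauto
    obtain ⟨k, hk⟩ := id heven
    refine exists_better_of_first hq (by omega) hA hf hg hp.reverse (by simpa using hpos)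
      (by simpa using heven) hcomp.reverse ?_
    have h := (halt (p.length - 1) (by omega)).2 (by
      rw [show p.length - 1 = 2 * (k - 1) + 1 by omega]
      exact Nat.not_even_two_mul_add_one _)
    rw [show p.length - 1 + 1 = p.length by omega] at h
    rwa [Walk.getVert_reverse, Walk.getVert_reverse, Nat.sub_zero, Sym2.eq_swap]

end EdgeTrans
end

section
/- Let q ≥ 3 be an integer and let G be a graph in A(q) with maximum degree t ≥ q+2. Let f and g be two different proper t-edge-colorings of G such that the subgraph G(f,g,t) has a component which is a path of odd length. Then there are two proper t-edge-colorings f̄ and ḡ of G such that f̄ is (q+1)-equivalent to f, ḡ is (q+1)-equivalent to g, and |M(f̄,t) ∩ M(ḡ,t)| > |M(f,t) ∩ M(g,t)|. -/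
/-!
By symmetry the path component `P` of `G(f,g,t)` starts with an edge of `M(f,t)`; having odd
length, it also ends with one. Then `f` is kept, and `g` is transformed so that its color class
`t` becomes `M(g,t) △ P`, which has one more edge in common with `M(f,t)`.

The switch is made two edges at a time. Write `v` for the current start of the remaining path
`v, w, w', …`, so that `vw ∈ M(f,t)` and `ww' ∈ M(g,t)`. An intermediate stage (`State`) consists
of a proper coloring `φ`, a matching `T` missing `v`, and a set `B` of `q - 1` colors other than
`t`, such that `T` uses only colors from `B ∪ {t}` and the other edges colored from `B ∪ {t}` have
degree at most `q - 1` at all vertices but `v`. The matching `T` is not required to be a color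
class: making it one would need a `(q - 1)`-coloring of these other edges, which `𝒜(q)` does not
provide, and only their union with `T` is known to have maximum degree at most `q`.

To pass from `T` to `T + vw - ww'` (`State.step`), add one color to `B`, obtaining `q + 1` colors
including `t`. The edges with these colors outside `T + vw` have maximum degree at most `q`
(`State.exists_colors`), so `𝒜(q)` gives them a proper `q`-coloring. At `w` two edges were
removed, so some color `α` is free at `w`. Set aside a color class other than `α`. The remaining
classes together with `ww'` have degree at most `q - 1` except possibly at `w'`, because `ww'`
could receive `α` at `w`; and `w'` is missed by `T + vw - ww'`. Hence adding this matching gives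
maximum degree at most `q`, and by `𝒜(q)` all these edges can be colored properly with `q` colors,
the last of the `q + 1` colors being used on the class set aside. At most `q + 1` color classes
have changed, and the new stage has `w'` in place of `v`.

When a single edge `vx` of the path remains, both its ends are missed by `T`, and the `q + 1`
colors suffice to make `T + vx` the color class `t` (`State.finish`). Induction along the path
(`State.slide`) and a comparison of `M(f,t) ∩ M(g,t)` with the new intersection
(`exists_better_of_first_edge`) complete the argument.
-/

open SimpleGraph Set

namespace EdgeTrans

universe u v

variable {V : Type*} {W : Type*}

/-! ### Colorings of edge sets -/

/-- `ψ` restricts to a proper edge-coloring of the edge set `S` with colors from `C`. -/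
def ProperOn (S : Set (Sym2 V)) (C : Finset ℕ) (ψ : Sym2 V → ℕ) : Prop :=
  (∀ e ∈ S, ψ e ∈ C) ∧
  ∀ e₁ ∈ S, ∀ e₂ ∈ S, e₁ ≠ e₂ → (∃ y, y ∈ e₁ ∧ y ∈ e₂) → ψ e₁ ≠ ψ e₂

/-- The number of edges of the edge set `S` at the vertex `y`. -/
noncomputable def dg (S : Set (Sym2 V)) (y : V) : ℕ := {e | e ∈ S ∧ y ∈ e}.ncard

/-- Edges of `S` sharing a vertex coincide. -/
def IsMatch (S : Set (Sym2 V)) : Prop :=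
  ∀ e₁ ∈ S, ∀ e₂ ∈ S, ∀ y, y ∈ e₁ → y ∈ e₂ → e₁ = e₂

/-- The edges of `G` whose color under `φ` lies in `Q`. -/
def coloredIn (G : SimpleGraph V) (φ : Sym2 V → ℕ) (Q : Finset ℕ) : Set (Sym2 V) :=
  {e | e ∈ G.edgeSet ∧ φ e ∈ Q}

lemma dg_le_card [Fintype V] {S : Set (Sym2 V)} {y : V} (C : Finset ℕ) (ψ : Sym2 V → ℕ)
    (hC : ∀ e ∈ S, y ∈ e → ψ e ∈ C)
    (hinj : ∀ e₁ ∈ S, ∀ e₂ ∈ S, y ∈ e₁ → y ∈ e₂ → ψ e₁ = ψ e₂ → e₁ = e₂) :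
    dg S y ≤ C.card := by
  rw [← Set.ncard_coe_finset]
  exact Set.ncard_le_ncard_of_injOn ψ (fun e he => hC e he.1 he.2)
    (fun a ha b hb => hinj a ha.1 b hb.1 ha.2 hb.2) (Finset.finite_toSet C)

lemma dg_le_card_of_properOn [Fintype V] {S : Set (Sym2 V)} {y : V} {C C' : Finset ℕ}
    {ψ : Sym2 V → ℕ} {S' : Set (Sym2 V)} (h : ProperOn S C ψ) (hS : S' ⊆ S)
    (hC : ∀ e ∈ S', y ∈ e → ψ e ∈ C') : dg S' y ≤ C'.card := by
  refine dg_le_card C' ψ hC fun e₁ h₁ e₂ h₂ y₁ y₂ he => ?_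
  by_contra hne
  exact h.2 e₁ (hS h₁) e₂ (hS h₂) hne ⟨y, y₁, y₂⟩ he

lemma dg_mono [Fintype V] {S S' : Set (Sym2 V)} (h : S ⊆ S') (y : V) : dg S y ≤ dg S' y :=
  Set.ncard_le_ncard (fun _ he => ⟨h he.1, he.2⟩) (Set.toFinite _)

lemma dg_union_le [Fintype V] (S S' : Set (Sym2 V)) (y : V) :
    dg (S ∪ S') y ≤ dg S y + dg S' y := by
  refine le_trans (Set.ncard_le_ncard ?_ (Set.toFinite _)) (Set.ncard_union_le _ _)
  rintro e ⟨he | he, hy⟩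
  · exact Or.inl ⟨he, hy⟩
  · exact Or.inr ⟨he, hy⟩

lemma IsMatch.dg_le_one {S : Set (Sym2 V)} (h : IsMatch S) (y : V) : dg S y ≤ 1 := by
  unfold dg
  by_cases hfin : {e | e ∈ S ∧ y ∈ e}.Finite
  · exact (Set.ncard_le_one hfin).2 fun a ha b hb => h a ha.1 b hb.1 y ha.2 hb.2
  · rw [Set.Infinite.ncard hfin]; omega

lemma isMatch_colorClass {G : SimpleGraph V} {t : ℕ} {φ : Sym2 V → ℕ}
    (h : IsProperEdgeColoring G t φ) (j : ℕ) : IsMatch (colorClass G φ j) := by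
  intro e₁ h₁ e₂ h₂ y y₁ y₂
  by_contra hne
  exact h.2 e₁ h₁.1 e₂ h₂.1 hne ⟨y, y₁, y₂⟩ (h₁.2.trans h₂.2.symm)

/-- Membership in `𝒜(q)`, rephrased for edge sets and an arbitrary set of `q` colors. -/
lemma exists_properOn [Fintype V] {q : ℕ} {G : SimpleGraph V} (hA : MemA q G)
    {R : Set (Sym2 V)} (hR : R ⊆ G.edgeSet) (hd : ∀ y, dg R y ≤ q) (C : Finset ℕ)
    (hC : C.card = q) : ∃ ψ, ProperOn R C ψ := by
  have hE : (SimpleGraph.fromEdgeSet R).edgeSet = R := by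
    rw [SimpleGraph.edgeSet_fromEdgeSet]
    ext e
    simp only [Set.mem_sdiff]
    exact ⟨fun h => h.1, fun h => ⟨h, G.not_isDiag_of_mem_edgeSet (hR h)⟩⟩
  have hle : SimpleGraph.fromEdgeSet R ≤ G := by
    rw [← SimpleGraph.edgeSet_subset_edgeSet, hE]; exact hR
  have hmax : maxDeg (SimpleGraph.fromEdgeSet R) ≤ q := by
    refine ciSup_le' fun y => le_trans ?_ (hd y)
    refine Set.ncard_le_ncard_of_injOn (fun z => s(y, z)) ?_ ?_ (Set.toFinite _)
    · intro z hz
      refine ⟨?_, Sym2.mem_mk_left _ _⟩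
      rw [← hE]; exact hz
    · intro a _ b _ hab
      exact Sym2.congr_right.1 hab
  obtain ⟨ψ, hψ⟩ := hA _ hle hmax
  obtain ⟨σ, hσ, hinj⟩ : ∃ σ : ℕ → ℕ, (∀ i ∈ Finset.Icc 1 q, σ i ∈ C) ∧
      Set.InjOn σ (Finset.Icc 1 q : Finset ℕ) := by
    obtain ⟨σ, h1, h2⟩ := (Finset.finite_toSet (Finset.Icc 1 q)).exists_injOn_of_encard_le
      (t := (C : Set ℕ)) (by
        rw [Set.encard_coe_eq_coe_finsetCard, Set.encard_coe_eq_coe_finsetCard, hC]; simp)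
    exact ⟨σ, fun i hi => h1 hi, h2⟩
  unfold IsProperEdgeColoring at hψ
  rw [hE] at hψ
  refine ⟨σ ∘ ψ, fun e he => hσ _ (hψ.1 e he), fun e₁ h₁ e₂ h₂ hne hy heq => ?_⟩
  exact hψ.2 e₁ h₁ e₂ h₂ hne hy (hinj (hψ.1 e₁ h₁) (hψ.1 e₂ h₂) heq)

/-- Recoloring the edges with colors in `Q` by colors in `Q`, and keeping all other colors, gives
a proper coloring which differs from the old one in at most `|Q|` color classes. -/
lemma exists_glue {G : SimpleGraph V} {t : ℕ} {φ : Sym2 V → ℕ}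
    (hφ : IsProperEdgeColoring G t φ) {Q : Finset ℕ} (hQ : Q ⊆ Finset.Icc 1 t)
    {ψ : Sym2 V → ℕ} (hψ : ProperOn (coloredIn G φ Q) Q ψ) :
    ∃ φ', IsProperEdgeColoring G t φ' ∧ DifferAtMost G Q.card φ' φ ∧
      (∀ e ∈ coloredIn G φ Q, φ' e = ψ e) ∧ (∀ e ∉ coloredIn G φ Q, φ' e = φ e) := by
  classical
  set φ' : Sym2 V → ℕ := fun e => if e ∈ coloredIn G φ Q then ψ e else φ e with hdef
  have h1 : ∀ e ∈ coloredIn G φ Q, φ' e = ψ e := fun e he => if_pos he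
  have h2 : ∀ e ∉ coloredIn G φ Q, φ' e = φ e := fun e he => if_neg he
  have hout : ∀ e ∈ G.edgeSet, e ∉ coloredIn G φ Q → φ e ∉ Q := fun e he hn hq => hn ⟨he, hq⟩
  refine ⟨φ', ⟨fun e he => ?_, fun e₁ he₁ e₂ he₂ hne hy => ?_⟩, ?_, h1, h2⟩
  · by_cases h : e ∈ coloredIn G φ Q
    · rw [h1 e h]; exact hQ (hψ.1 e h)
    · rw [h2 e h]; exact hφ.1 e he
  · by_cases ha : e₁ ∈ coloredIn G φ Q <;> by_cases hb : e₂ ∈ coloredIn G φ Q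
    · rw [h1 _ ha, h1 _ hb]; exact hψ.2 _ ha _ hb hne hy
    · rw [h1 _ ha, h2 _ hb]
      exact fun h => hout _ he₂ hb (h ▸ hψ.1 _ ha)
    · rw [h2 _ ha, h1 _ hb]
      exact fun h => hout _ he₁ ha (h ▸ hψ.1 _ hb)
    · rw [h2 _ ha, h2 _ hb]; exact hφ.2 _ he₁ _ he₂ hne hy
  · have hsub : {j : ℕ | colorClass G φ' j ≠ colorClass G φ j} ⊆ (Q : Set ℕ) := by
      intro j hj
      by_contra hjQ
      apply hj
      ext e
      simp only [colorClass, Set.mem_ofPred_eq]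
      refine and_congr_right fun he => ?_
      by_cases h : e ∈ coloredIn G φ Q
      · rw [h1 e h]
        exact ⟨fun hh => absurd (hψ.1 e h) (by rw [hh]; exact hjQ),
          fun hh => absurd h.2 (by rw [hh]; exact hjQ)⟩
      · rw [h2 e h]
    have := Set.ncard_le_ncard hsub (Finset.finite_toSet Q)
    rwa [Set.ncard_coe_finset] at this

lemma NEquiv.of_differ {G : SimpleGraph V} {t n : ℕ} {a b : Sym2 V → ℕ}
    (ha : IsProperEdgeColoring G t a) (hb : IsProperEdgeColoring G t b)
    (h : DifferAtMost G n a b) : NEquiv G t n a b := by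
  refine ⟨1, fun i => if i = 0 then a else b, le_rfl, by simp, by simp, fun i _ => ?_,
    fun i hi => ?_⟩
  · by_cases h0 : i = 0 <;> simp [h0, ha, hb]
  · obtain rfl : i = 0 := by omega
    simpa using h

lemma NEquiv.refl {G : SimpleGraph V} {t n : ℕ} {a : Sym2 V → ℕ}
    (ha : IsProperEdgeColoring G t a) : NEquiv G t n a a :=
  NEquiv.of_differ ha ha (by simp [DifferAtMost])

lemma NEquiv.snoc {G : SimpleGraph V} {t n : ℕ} {a b c : Sym2 V → ℕ}
    (hab : NEquiv G t n a b) (hc : IsProperEdgeColoring G t c)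
    (h : DifferAtMost G n b c) : NEquiv G t n a c := by
  obtain ⟨k, F, hk, h0, hFk, hp, hd⟩ := hab
  refine ⟨k + 1, fun i => if i ≤ k then F i else c, by omega, by simp [h0], by simp,
    fun i hi => ?_, fun i hi => ?_⟩
  · by_cases hik : i ≤ k
    · simpa [hik] using hp i hik
    · simpa [hik] using hc
  · rcases Nat.lt_succ_iff_lt_or_eq.1 hi with hik | rfl
    · have h1 : i ≤ k := by omega
      have h2 : i + 1 ≤ k := by omega
      simpa [h1, h2] using hd i hik
    · simpa [hFk] using h

/-! ### Sliding the uncovered vertex along the path -/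

/-- An intermediate stage of the transformation: a proper coloring `φ`, a set `B` of `q - 1`
colors other than `t`, and a matching `T` leaving `v` uncovered, such that the edges outside `T`
with colors in `B ∪ {t}` have degree at most `q - 1` at every vertex other than `v`. Apart from
the first stage, `T` need not be a color class of `φ`. -/
structure State (G : SimpleGraph V) (t q : ℕ) (φ : Sym2 V → ℕ) (T : Set (Sym2 V))
    (B : Finset ℕ) (v : V) : Prop where
  proper : IsProperEdgeColoring G t φ
  colors : B ⊆ Finset.Icc 1 (t - 1)
  card : B.card + 1 = q
  sub : T ⊆ coloredIn G φ (insert t B)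
  isMatch : IsMatch T
  uncovered : ∀ e ∈ T, v ∉ e
  degree : ∀ w, w ≠ v → dg (coloredIn G φ (insert t B) \ T) w ≤ q - 1

lemma coloredIn_mono {G : SimpleGraph V} {φ : Sym2 V → ℕ} {Q Q' : Finset ℕ} (h : Q ⊆ Q') :
    coloredIn G φ Q ⊆ coloredIn G φ Q' := fun _ he => ⟨he.1, h he.2⟩

lemma IsProperEdgeColoring.properOn {G : SimpleGraph V} {t : ℕ} {φ : Sym2 V → ℕ}
    (h : IsProperEdgeColoring G t φ) (Q : Finset ℕ) : ProperOn (coloredIn G φ Q) Q φ :=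
  ⟨fun _ he => he.2, fun e₁ h₁ e₂ h₂ => h.2 e₁ h₁.1 e₂ h₂.1⟩

/-- One more color can be added to `B` so that, for an edge `e` at the uncovered vertex, the
edges outside `T` and `e` with colors in `B' ∪ {t}` have maximum degree at most `q`. At vertices
other than `v` the new color adds at most one to the degree; at `v`, all `q + 1` colors but that
of `e` are available. -/
lemma State.exists_colors [Fintype V] {G : SimpleGraph V} {t q : ℕ} {φ : Sym2 V → ℕ}
    {T : Set (Sym2 V)} {B : Finset ℕ} {v : V} (hS : State G t q φ T B v) (htq : q + 2 ≤ t)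
    {e : Sym2 V} (he : e ∈ G.edgeSet) (hv : v ∈ e) :
    ∃ B' : Finset ℕ, B' ⊆ Finset.Icc 1 (t - 1) ∧ B'.card = q ∧ φ e ∈ insert t B' ∧
      T ⊆ coloredIn G φ (insert t B') ∧
      ∀ y, dg (coloredIn G φ (insert t B') \ insert e T) y ≤ q := by
  have hcard := hS.card
  obtain ⟨b, hb, hbB, hbe⟩ : ∃ b ∈ Finset.Icc 1 (t - 1), b ∉ B ∧
      φ e ∈ insert t (insert b B) := by
    by_cases h : φ e ∈ insert t B
    · obtain ⟨b, hb, hbB⟩ := Finset.exists_mem_notMem_of_card_lt_card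
        (s := B) (t := Finset.Icc 1 (t - 1)) (by rw [Nat.card_Icc]; omega)
      refine ⟨b, hb, hbB, ?_⟩
      simp only [Finset.mem_insert] at h ⊢
      tauto
    · simp only [Finset.mem_insert, not_or] at h
      have h1 := Finset.mem_Icc.1 (hS.proper.1 e he)
      refine ⟨φ e, Finset.mem_Icc.2 ⟨h1.1, by omega⟩, h.2, by simp⟩
  have hsub : insert b B ⊆ Finset.Icc 1 (t - 1) := Finset.insert_subset hb hS.colors
  have hc : (insert b B).card = q := by rw [Finset.card_insert_of_notMem hbB, hcard]
  have hmono : insert t B ⊆ insert t (insert b B) :=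
    Finset.insert_subset_insert _ (Finset.subset_insert _ _)
  have ht : t ∉ insert b B := fun h => by
    have := Finset.mem_Icc.1 (hsub h); omega
  refine ⟨insert b B, hsub, hc, hbe, hS.sub.trans (coloredIn_mono hmono), fun y => ?_⟩
  by_cases hy : y = v
  · subst hy
    refine (dg_le_card_of_properOn (C' := (insert t (insert b B)).erase (φ e))
      (hS.proper.properOn (insert t (insert b B))) Set.sdiff_subset ?_).trans ?_
    · intro r hr hyr
      refine Finset.mem_erase.2 ⟨?_, hr.1.2⟩
      refine hS.proper.2 r hr.1.1 e he ?_ ⟨y, hyr, hv⟩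
      rintro rfl
      exact hr.2 (Set.mem_insert _ _)
    · rw [Finset.card_erase_of_mem hbe, Finset.card_insert_of_notMem ht, hc]; simp
  · have hcov : coloredIn G φ (insert t (insert b B)) \ insert e T ⊆
        (coloredIn G φ (insert t B) \ T) ∪ colorClass G φ b := by
      rintro r ⟨⟨hr, hrc⟩, hrT⟩
      simp only [Set.mem_insert_iff, not_or] at hrT
      simp only [Finset.mem_insert] at hrc
      by_cases h : φ r = b
      · exact Or.inr ⟨hr, h⟩
      · refine Or.inl ⟨⟨hr, ?_⟩, hrT.2⟩
        simp only [Finset.mem_insert]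
        tauto
    have h1 := (dg_mono hcov y).trans (dg_union_le _ _ _)
    have h2 := hS.degree y hy
    have h3 := (isMatch_colorClass hS.proper b).dg_le_one y
    omega

/-- The step `T ↦ T + vw - ww'` moves the uncovered vertex from `v` to `w'`. The residual edges
are colored with `q` colors by `𝒜(q)`; some color `α` is then free at `w`, and setting
aside a color class other than `α` leaves room at `w` for the edge `ww'`. -/
lemma State.step [Fintype V] {G : SimpleGraph V} {t q : ℕ} {φ : Sym2 V → ℕ}
    {T : Set (Sym2 V)} {B : Finset ℕ} {v w w' : V} (hA : MemA q G) (hq : 3 ≤ q)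
    (hS : State G t q φ T B v) (htq : q + 2 ≤ t)
    (he : s(v, w) ∈ G.edgeSet) (he' : s(w, w') ∈ T) (hw' : w' ≠ v) :
    ∃ φ' B', State G t q φ' (insert s(v, w) (T \ {s(w, w')})) B' w' ∧
      DifferAtMost G (q + 1) φ' φ := by
  classical
  obtain ⟨B₁, hB₁, hc₁, hφe, hT₁, hdeg⟩ := hS.exists_colors htq he (Sym2.mem_mk_left v w)
  have ht₁ : t ∉ B₁ := fun h => by have := Finset.mem_Icc.1 (hB₁ h); omega
  have hTE : ∀ r ∈ T, r ∈ G.edgeSet := fun r hr => (hS.sub hr).1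
  have heT : s(v, w) ∉ T := fun h => hS.uncovered _ h (Sym2.mem_mk_left v w)
  have hee : s(v, w) ≠ s(w, w') := fun h => heT (h ▸ he')
  have hww : w' ≠ w := (G.ne_of_adj (hTE _ he')).symm
  set e := s(v, w) with hedef
  set e' := s(w, w') with hedef'
  have hwe : w ∈ e := Sym2.mem_mk_right v w
  have hwe' : w ∈ e' := Sym2.mem_mk_left w w'
  set T' := insert e (T \ {e'}) with hT'
  have hT'm : IsMatch T' := by
    have key : ∀ r ∈ T \ {e'}, ∀ y, y ∈ e → y ∉ r := by
      rintro r ⟨hr, hre⟩ y hy hyr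
      rcases Sym2.mem_iff.1 hy with rfl | rfl
      · exact hS.uncovered r hr hyr
      · exact hre (hS.isMatch r hr e' he' _ hyr hwe')
    rintro a (rfl | ha) b (rfl | hb) y hya hyb
    · rfl
    · exact absurd hyb (key b hb y hya)
    · exact absurd hya (key a ha y hyb)
    · exact hS.isMatch a ha.1 b hb.1 y hya hyb
  have hT'u : ∀ r ∈ T', w' ∉ r := by
    rintro r (rfl | hr) hy
    · rcases Sym2.mem_iff.1 hy with h | h
      · exact hw' h
      · exact hww h
    · exact hr.2 (hS.isMatch r hr.1 e' he' w' hy (Sym2.mem_mk_right w w'))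
  set R := coloredIn G φ (insert t B₁) \ insert e T with hR
  have hRE : R ⊆ G.edgeSet := fun r hr => hr.1.1
  obtain ⟨ψ, hψ⟩ := exists_properOn hA hRE hdeg B₁ hc₁
  have he'Q : φ e' ∈ insert t B₁ := (hT₁ he').2
  have hRw : dg R w ≤ q - 1 := by
    refine (dg_le_card_of_properOn (C' := ((insert t B₁).erase (φ e)).erase (φ e'))
      (hS.proper.properOn (insert t B₁)) Set.sdiff_subset ?_).trans ?_
    · intro r hr hyr
      refine Finset.mem_erase.2 ⟨?_, Finset.mem_erase.2 ⟨?_, hr.1.2⟩⟩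
      · refine hS.proper.2 r hr.1.1 e' (hTE _ he') ?_ ⟨w, hyr, hwe'⟩
        rintro rfl
        exact hr.2 (Or.inr he')
      · refine hS.proper.2 r hr.1.1 e he ?_ ⟨w, hyr, hwe⟩
        rintro rfl
        exact hr.2 (Or.inl rfl)
    · rw [Finset.card_erase_of_mem, Finset.card_erase_of_mem hφe,
        Finset.card_insert_of_notMem ht₁, hc₁]
      · simp
      · exact Finset.mem_erase.2
          ⟨hS.proper.2 e' (hTE _ he') e he hee.symm ⟨w, hwe', hwe⟩, he'Q⟩
  obtain ⟨α, hα, hαw⟩ : ∃ α ∈ B₁, ∀ r ∈ R, w ∈ r → ψ r ≠ α := by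
    by_contra! hcon
    have hsub : (B₁ : Set ℕ) ⊆ ψ '' {r | r ∈ R ∧ w ∈ r} := by
      intro a ha
      obtain ⟨r, hr, hwr, hra⟩ := hcon a ha
      exact ⟨r, ⟨hr, hwr⟩, hra⟩
    have h1 := Set.ncard_le_ncard hsub (Set.toFinite _)
    have h2 := Set.ncard_image_le (f := ψ) (Set.toFinite {r | r ∈ R ∧ w ∈ r})
    rw [Set.ncard_coe_finset, hc₁] at h1
    have h3 : dg R w = {r | r ∈ R ∧ w ∈ r}.ncard := rfl
    omega
  obtain ⟨b, hb⟩ : (B₁.erase α).Nonempty := by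
    rw [← Finset.card_pos, Finset.card_erase_of_mem hα]; omega
  obtain ⟨hbα, hbB⟩ := Finset.mem_erase.1 hb
  set B' := B₁.erase b with hB'
  have hB'c : B'.card = q - 1 := by rw [hB', Finset.card_erase_of_mem hbB, hc₁]
  have hαB' : α ∈ B' := Finset.mem_erase.2 ⟨hbα.symm, hα⟩
  have ht' : t ∉ B' := fun h => ht₁ (Finset.mem_of_mem_erase h)
  have hQ'c : (insert t B').card = q := by
    rw [Finset.card_insert_of_notMem ht', hB'c]; omega
  have hbQ' : b ∉ insert t B' := by
    simp only [hB', Finset.mem_insert, Finset.mem_erase, ne_eq, not_true_eq_false, false_and,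
      or_false]
    rintro rfl
    exact ht₁ hbB
  set U : Set (Sym2 V) := insert e' {r | r ∈ R ∧ ψ r ∈ B'} with hU
  have he'R : e' ∉ R := fun h => h.2 (Or.inr he')
  have hUw : ∀ y, y ≠ w' → dg U y ≤ q - 1 := by
    intro y hy
    -- The color `α`, free at `w`, serves for the edge `ww'`.
    rw [← hB'c]
    have hy' : y ∈ e' → y = w := fun h => (Sym2.mem_iff.1 h).resolve_right hy
    have hne : ∀ r ∈ R, r ≠ e' := fun r hr h => he'R (h ▸ hr)
    refine dg_le_card B' (Function.update ψ e' α) ?_ ?_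
    · rintro r (rfl | hr) _
      · simpa using hαB'
      · rw [Function.update_of_ne (hne r hr.1)]; exact hr.2
    · rintro r₁ (rfl | h₁) r₂ (rfl | h₂) y₁ y₂ heq
      · rfl
      · rw [Function.update_self, Function.update_of_ne (hne _ h₂.1)] at heq
        exact absurd heq.symm (hαw _ h₂.1 (hy' y₁ ▸ y₂))
      · rw [Function.update_self, Function.update_of_ne (hne _ h₁.1)] at heq
        exact absurd heq (hαw _ h₁.1 (hy' y₂ ▸ y₁))
      · rw [Function.update_of_ne (hne _ h₁.1), Function.update_of_ne (hne _ h₂.1)] at heq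
        by_contra hcon
        exact hψ.2 _ h₁.1 _ h₂.1 hcon ⟨y, y₁, y₂⟩ heq
  have hUw' : dg U w' ≤ q := by
    have h1 : dg U w' ≤ dg {e'} w' + dg {r | r ∈ R ∧ ψ r ∈ B'} w' := dg_union_le _ _ _
    have h2 : dg {e'} w' ≤ 1 := IsMatch.dg_le_one (fun _ h _ h' _ _ _ => h.trans h'.symm) _
    have h3 : dg {r | r ∈ R ∧ ψ r ∈ B'} w' ≤ q - 1 := by
      rw [← hB'c]
      exact dg_le_card_of_properOn hψ (fun r hr => hr.1) (fun r hr _ => hr.2)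
    omega
  have hSd : ∀ y, dg (U ∪ T') y ≤ q := by
    intro y
    have h1 := dg_union_le U T' y
    by_cases hy : y = w'
    · subst hy
      have h0 : dg T' y = 0 := by
        have : {r | r ∈ T' ∧ y ∈ r} = ∅ :=
          Set.eq_empty_of_forall_notMem fun r hr => hT'u r hr.1 hr.2
        rw [dg, this, Set.ncard_empty]
      omega
    · have h2 := hUw y hy
      have h3 := hT'm.dg_le_one y
      omega
  have hSS : U ∪ T' ⊆ coloredIn G φ (insert t B₁) := by
    rintro r ((rfl | hr) | (rfl | hr))
    · exact hT₁ he'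
    · exact hr.1.1
    · exact ⟨he, hφe⟩
    · exact hT₁ hr.1
  obtain ⟨χ, hχ⟩ := exists_properOn hA (fun r hr => (hSS hr).1) hSd _ hQ'c
  have hrest : ∀ r ∈ coloredIn G φ (insert t B₁), r ∉ U ∪ T' → r ∈ R ∧ ψ r = b := by
    intro r hr hrS
    have hrT : r ∉ insert e T := by
      rintro (rfl | h)
      · exact hrS (Or.inr (Or.inl rfl))
      · by_cases h' : r = e'
        · exact hrS (Or.inl (Or.inl h'))
        · exact hrS (Or.inr (Or.inr ⟨h, h'⟩))
    have hrR : r ∈ R := ⟨hr, hrT⟩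
    refine ⟨hrR, ?_⟩
    by_contra hne
    exact hrS (Or.inl (Or.inr ⟨hrR, Finset.mem_erase.2 ⟨hne, hψ.1 r hrR⟩⟩))
  have hsubQ : insert t B' ⊆ insert t B₁ :=
    Finset.insert_subset_insert _ (Finset.erase_subset _ _)
  have hψ' : ProperOn (coloredIn G φ (insert t B₁)) (insert t B₁)
      (fun r => if r ∈ U ∪ T' then χ r else b) := by
    refine ⟨fun r hr => ?_, fun r₁ h₁ r₂ h₂ hne hy => ?_⟩
    · by_cases h : r ∈ U ∪ T'
      · simp only [if_pos h]; exact hsubQ (hχ.1 r h)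
      · simp only [if_neg h]; exact Finset.mem_insert_of_mem hbB
    · by_cases ha : r₁ ∈ U ∪ T' <;> by_cases hb' : r₂ ∈ U ∪ T'
      · simp only [if_pos ha, if_pos hb']; exact hχ.2 _ ha _ hb' hne hy
      · simp only [if_pos ha, if_neg hb']
        exact fun h => hbQ' (h ▸ hχ.1 _ ha)
      · simp only [if_neg ha, if_pos hb']
        exact fun h => hbQ' (h ▸ hχ.1 _ hb')
      · obtain ⟨m₁, c₁⟩ := hrest _ h₁ ha
        obtain ⟨m₂, c₂⟩ := hrest _ h₂ hb'
        exact absurd (c₁.trans c₂.symm) (hψ.2 _ m₁ _ m₂ hne hy)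
  have hQ : insert t B₁ ⊆ Finset.Icc 1 t := by
    refine Finset.insert_subset (Finset.mem_Icc.2 ⟨by omega, le_rfl⟩) (hB₁.trans ?_)
    exact Finset.Icc_subset_Icc_right (by omega)
  obtain ⟨φ', hp', hd', hin, hout⟩ := exists_glue hS.proper hQ hψ'
  rw [Finset.card_insert_of_notMem ht₁, hc₁] at hd'
  have hcol : coloredIn G φ' (insert t B') = U ∪ T' := by
    ext r
    constructor
    · rintro ⟨hrE, hrc⟩
      by_contra hrS
      by_cases h : r ∈ coloredIn G φ (insert t B₁)
      · rw [hin r h, if_neg hrS] at hrc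
        exact hbQ' hrc
      · rw [hout r h] at hrc
        exact h ⟨hrE, hsubQ hrc⟩
    · intro hr
      refine ⟨(hSS hr).1, ?_⟩
      rw [hin r (hSS hr), if_pos hr]
      exact hχ.1 r hr
  refine ⟨φ', B', ⟨hp', (Finset.erase_subset _ _).trans hB₁, by omega, ?_, hT'm, hT'u, ?_⟩, hd'⟩
  · rw [hcol]; exact Set.subset_union_right
  · intro y hy
    rw [hcol]
    refine (dg_mono ?_ y).trans (hUw y hy)
    rintro r ⟨hr | hr, hr'⟩
    · exact hr
    · exact absurd hr hr'

/-- If both ends of `e` are uncovered, `T + e` can be made the color class `t`. -/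
lemma State.finish [Fintype V] {G : SimpleGraph V} {t q : ℕ} {φ : Sym2 V → ℕ}
    {T : Set (Sym2 V)} {B : Finset ℕ} {v x : V} (hA : MemA q G)
    (hS : State G t q φ T B v) (htq : q + 2 ≤ t)
    (he : s(v, x) ∈ G.edgeSet) (hx : ∀ r ∈ T, x ∉ r) :
    ∃ ψ, IsProperEdgeColoring G t ψ ∧ DifferAtMost G (q + 1) ψ φ ∧
      colorClass G ψ t = insert s(v, x) T := by
  classical
  obtain ⟨B₁, hB₁, hc₁, hφe, hT₁, hdeg⟩ := hS.exists_colors htq he (Sym2.mem_mk_left v x)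
  have ht₁ : t ∉ B₁ := fun h => by have := Finset.mem_Icc.1 (hB₁ h); omega
  have hm : IsMatch (insert s(v, x) T) := by
    have key : ∀ r ∈ T, ∀ y, y ∈ s(v, x) → y ∉ r := by
      intro r hr y hy hyr
      rcases Sym2.mem_iff.1 hy with rfl | rfl
      · exact hS.uncovered r hr hyr
      · exact hx r hr hyr
    rintro a (rfl | ha) b (rfl | hb) y hya hyb
    · rfl
    · exact absurd hyb (key b hb y hya)
    · exact absurd hya (key a ha y hyb)
    · exact hS.isMatch a ha b hb y hya hyb
  obtain ⟨χ, hχ⟩ := exists_properOn hA (fun r hr => hr.1.1) hdeg B₁ hc₁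
  have hψ' : ProperOn (coloredIn G φ (insert t B₁)) (insert t B₁)
      (fun r => if r ∈ insert s(v, x) T then t else χ r) := by
    refine ⟨fun r hr => ?_, fun r₁ h₁ r₂ h₂ hne hy => ?_⟩
    · by_cases h : r ∈ insert s(v, x) T
      · simp only [if_pos h]; exact Finset.mem_insert_self _ _
      · simp only [if_neg h]; exact Finset.mem_insert_of_mem (hχ.1 r ⟨hr, h⟩)
    · by_cases ha : r₁ ∈ insert s(v, x) T <;> by_cases hb : r₂ ∈ insert s(v, x) T
      · obtain ⟨y, y₁, y₂⟩ := hy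
        exact absurd (hm _ ha _ hb y y₁ y₂) hne
      · simp only [if_pos ha, if_neg hb]
        exact fun h => ht₁ (h ▸ hχ.1 _ ⟨h₂, hb⟩)
      · simp only [if_neg ha, if_pos hb]
        exact fun h => ht₁ (h ▸ hχ.1 _ ⟨h₁, ha⟩)
      · simp only [if_neg ha, if_neg hb]
        exact hχ.2 _ ⟨h₁, ha⟩ _ ⟨h₂, hb⟩ hne hy
  have hQ : insert t B₁ ⊆ Finset.Icc 1 t := by
    refine Finset.insert_subset (Finset.mem_Icc.2 ⟨by omega, le_rfl⟩) (hB₁.trans ?_)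
    exact Finset.Icc_subset_Icc_right (by omega)
  obtain ⟨ψ, hp, hd, hin, hout⟩ := exists_glue hS.proper hQ hψ'
  rw [Finset.card_insert_of_notMem ht₁, hc₁] at hd
  refine ⟨ψ, hp, hd, ?_⟩
  ext r
  constructor
  · rintro ⟨hrE, hrt⟩
    by_contra hr
    by_cases h : r ∈ coloredIn G φ (insert t B₁)
    · rw [hin r h, if_neg hr] at hrt
      exact ht₁ (hrt ▸ hχ.1 r ⟨h, hr⟩)
    · rw [hout r h] at hrt
      exact h ⟨hrE, hrt ▸ Finset.mem_insert_self _ _⟩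
  · intro hr
    have hrS : r ∈ coloredIn G φ (insert t B₁) := by
      rcases hr with rfl | hr
      · exact ⟨he, hφe⟩
      · exact hT₁ hr
    exact ⟨hrS.1, by rw [hin r hrS, if_pos hr]⟩

/-! ### Odd alternating paths -/

/-- Along a path of odd length alternating between the matchings `A` and `M` and starting in `A`,
some edge at the far end exists, and every such edge is in `A`. -/
lemma last_edge_mem {D : SimpleGraph V} {A M : Set (Sym2 V)} (hAm : IsMatch A) (hM : IsMatch M)
    (hD : ∀ e ∈ D.edgeSet, (e ∈ A ↔ e ∉ M)) (n : ℕ) :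
    ∀ (v x : V) (p : D.Walk v x), p.IsPath → p.length = 2 * n + 1 →
      (∀ e ∈ p.edges, v ∈ e → e ∈ A) →
      (∃ e ∈ p.edges, x ∈ e) ∧ ∀ e ∈ p.edges, x ∈ e → e ∈ A := by
  induction n with
  | zero =>
    intro v x p hp hl hv
    match p, hl with
    | .cons h .nil, _ =>
      simp only [Walk.edges_cons, Walk.edges_nil, List.mem_singleton] at hv ⊢
      refine ⟨⟨_, rfl, Sym2.mem_mk_right _ _⟩, ?_⟩
      rintro e rfl -
      exact hv _ rfl (Sym2.mem_mk_left _ _)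
  | succ n ih =>
    intro v x p hp hl hv
    match p, hp, hl, hv with
    | .cons h .nil, _, hl, _ => simp at hl
    | .cons (v := w) h (.cons (v := w') h' p), hp, hl, hv =>
      have hl' : p.length = 2 * n + 1 := by
        simp only [Walk.length_cons] at hl; omega
      rw [Walk.cons_isPath_iff, Walk.cons_isPath_iff] at hp
      obtain ⟨⟨hp, hw⟩, hv'⟩ := hp
      simp only [Walk.support_cons, List.mem_cons, not_or] at hv'
      simp only [Walk.edges_cons, List.mem_cons] at hv ⊢
      have heA : s(v, w) ∈ A := hv _ (Or.inl rfl) (Sym2.mem_mk_left _ _)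
      have he'M : s(w, w') ∈ M := by
        by_contra hcon
        have := hAm _ heA _ ((hD _ h').2 hcon) w (Sym2.mem_mk_right _ _) (Sym2.mem_mk_left _ _)
        exact hv'.2 (by
          have h1 : v ∈ s(w, w') := this ▸ Sym2.mem_mk_left v w
          rcases Sym2.mem_iff.1 h1 with h1 | h1
          · exact absurd h1 hv'.1
          · exact h1 ▸ p.start_mem_support)
      have hstart : ∀ e ∈ p.edges, w' ∈ e → e ∈ A := by
        intro r hr hwr
        rw [hD r (p.edges_subset_edgeSet hr)]
        intro hrM
        have := hM _ hrM _ he'M w' hwr (Sym2.mem_mk_right _ _)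
        exact hw (p.fst_mem_support_of_mem_edges (this ▸ hr))
      obtain ⟨⟨r, hr, hxr⟩, hall⟩ := ih w' x p hp hl' hstart
      have hxs := p.end_mem_support
      refine ⟨⟨r, Or.inr (Or.inr hr), hxr⟩, ?_⟩
      rintro e (rfl | rfl | he) hxe
      · exact heA
      · exfalso
        rcases Sym2.mem_iff.1 hxe with rfl | rfl
        · exact hw hxs
        · have := Walk.length_eq_zero_iff.2 (Walk.isPath_iff_nil.1 hp)
          omega
      · exact hall e he hxe

/-- Starting from a stage with uncovered vertex `v`, the color class `t` can be switched along an
odd alternating path from `v` to another uncovered vertex. -/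
lemma State.slide [Fintype V] {G : SimpleGraph V} {t q : ℕ} (hA : MemA q G) (hq : 3 ≤ q)
    (htq : q + 2 ≤ t) {D : SimpleGraph V} {A M : Set (Sym2 V)} (hAm : IsMatch A) (hM : IsMatch M)
    (hDG : D ≤ G) (hD : ∀ e ∈ D.edgeSet, (e ∈ A ↔ e ∉ M)) (n : ℕ) :
    ∀ (v x : V) (p : D.Walk v x) (φ : Sym2 V → ℕ) (T : Set (Sym2 V)) (B : Finset ℕ),
      p.IsPath → p.length = 2 * n + 1 → (∀ e ∈ p.edges, v ∈ e → e ∈ A) →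
      State G t q φ T B v → (∀ e ∈ p.edges, (e ∈ T ↔ e ∈ M)) → (∀ r ∈ T, x ∉ r) →
      ∃ ψ, IsProperEdgeColoring G t ψ ∧ NEquiv G t (q + 1) ψ φ ∧
        ∀ e, e ∈ colorClass G ψ t ↔ (e ∈ T ∧ e ∉ p.edges) ∨ (e ∈ p.edges ∧ e ∈ A) := by
  have hDE : ∀ e ∈ D.edgeSet, e ∈ G.edgeSet := fun e he =>
    SimpleGraph.edgeSet_subset_edgeSet.2 hDG he
  induction n with
  | zero =>
    intro v x p φ T B hp hl hv hS hTM hx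
    match p, hl with
    | .cons h .nil, _ =>
      simp only [Walk.edges_cons, Walk.edges_nil, List.mem_singleton] at hv hTM ⊢
      obtain ⟨ψ, hψ, hd, hcol⟩ := hS.finish hA htq (hDE _ h) hx
      refine ⟨ψ, hψ, NEquiv.of_differ hψ hS.proper hd, fun e => ?_⟩
      have heA : s(v, x) ∈ A := hv _ rfl (Sym2.mem_mk_left _ _)
      rw [hcol, Set.mem_insert_iff]
      by_cases h : e = s(v, x)
      · subst h; simp [heA]
      · simp [h]
  | succ n ih =>
    intro v x p φ T B hp hl hv hS hTM hx
    match p, hp, hl, hv, hTM with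
    | .cons h .nil, _, hl, _, _ => simp at hl
    | .cons (v := w) h (.cons (v := w') h' p), hp, hl, hv, hTM =>
      have hl' : p.length = 2 * n + 1 := by
        simp only [Walk.length_cons] at hl; omega
      rw [Walk.cons_isPath_iff, Walk.cons_isPath_iff] at hp
      obtain ⟨⟨hp, hw⟩, hv'⟩ := hp
      simp only [Walk.support_cons, List.mem_cons, not_or] at hv'
      simp only [Walk.edges_cons, List.mem_cons] at hv hTM ⊢
      have hw'v : w' ≠ v := fun h1 => hv'.2 (h1 ▸ p.start_mem_support)
      have hee : s(v, w) ≠ s(w, w') := by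
        intro heq
        have h1 : v ∈ s(w, w') := heq ▸ Sym2.mem_mk_left v w
        rcases Sym2.mem_iff.1 h1 with h1 | h1
        · exact hv'.1 h1
        · exact hw'v h1.symm
      have hep : s(v, w) ∉ p.edges := fun h1 => hv'.2 (p.fst_mem_support_of_mem_edges h1)
      have he'p : s(w, w') ∉ p.edges := fun h1 => hw (p.fst_mem_support_of_mem_edges h1)
      have heA : s(v, w) ∈ A := hv _ (Or.inl rfl) (Sym2.mem_mk_left _ _)
      have he'M : s(w, w') ∈ M := by
        by_contra hcon
        exact hee (hAm _ heA _ ((hD _ h').2 hcon) w (Sym2.mem_mk_right _ _)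
          (Sym2.mem_mk_left _ _))
      have he'A : s(w, w') ∉ A := fun h1 => (hD _ h').1 h1 he'M
      have he'T : s(w, w') ∈ T := (hTM _ (Or.inr (Or.inl rfl))).2 he'M
      have hstart : ∀ e ∈ p.edges, w' ∈ e → e ∈ A := by
        intro r hr hwr
        rw [hD r (p.edges_subset_edgeSet hr)]
        intro hrM
        have := hM _ hrM _ he'M w' hwr (Sym2.mem_mk_right _ _)
        exact he'p (this ▸ hr)
      obtain ⟨φ', B', hS', hd⟩ := hS.step hA hq htq (hDE _ h) he'T hw'v
      have hx' : ∀ r ∈ insert s(v, w) (T \ {s(w, w')}), x ∉ r := by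
        rintro r (rfl | hr) hxr
        · have hxs := p.end_mem_support
          rcases Sym2.mem_iff.1 hxr with rfl | rfl
          · exact hv'.2 hxs
          · exact hw hxs
        · exact hx r hr.1 hxr
      have hTM' : ∀ e ∈ p.edges, (e ∈ insert s(v, w) (T \ {s(w, w')}) ↔ e ∈ M) := by
        intro r hr
        have h1 : r ≠ s(v, w) := fun h1 => hep (h1 ▸ hr)
        have h2 : r ≠ s(w, w') := fun h1 => he'p (h1 ▸ hr)
        rw [← hTM r (Or.inr (Or.inr hr))]
        simp [h1, h2]
      obtain ⟨ψ, hψ, hequiv, hcol⟩ := ih w' x p φ' _ B' hp hl' hstart hS' hTM' hx'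
      refine ⟨ψ, hψ, hequiv.snoc hS.proper hd, fun r => ?_⟩
      rw [hcol, Set.mem_insert_iff, Set.mem_sdiff, Set.mem_singleton_iff]
      by_cases h1 : r = s(v, w)
      · subst h1; simp [heA, hep]
      · by_cases h2 : r = s(w, w')
        · subst h2; simp [he'A, he'p, hee.symm]
        · simp [h1, h2]

/-- One of the two symmetric cases of the theorem: the path component starts with an edge of
`M(f,t)`, and only `g` is changed. -/
lemma exists_better_of_first_edge [Fintype V] {q t : ℕ} (hq : 3 ≤ q) {G : SimpleGraph V}
    (hA : MemA q G) (htq : q + 2 ≤ t) {f g : Sym2 V → ℕ}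
    (hf : IsProperEdgeColoring G t f) (hg : IsProperEdgeColoring G t g)
    {D : SimpleGraph V} (hDG : D ≤ G)
    (hD : ∀ e ∈ G.edgeSet, (e ∈ D.edgeSet ↔ ¬ (e ∈ colorClass G f t ↔ e ∈ colorClass G g t)))
    {u x : V} (p : D.Walk u x) (hp : p.IsPath) (hodd : Odd p.length) (hcomp : IsComponentWalk p)
    (hu : ∀ e ∈ p.edges, u ∈ e → e ∈ colorClass G f t) :
    ∃ ψ, IsProperEdgeColoring G t ψ ∧ NEquiv G t (q + 1) ψ g ∧
      (colorClass G f t ∩ colorClass G g t).ncard <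
        (colorClass G f t ∩ colorClass G ψ t).ncard := by
  have hAm := isMatch_colorClass hf t
  have hM := isMatch_colorClass hg t
  have hDE : ∀ e ∈ D.edgeSet, e ∈ G.edgeSet := fun e he =>
    SimpleGraph.edgeSet_subset_edgeSet.2 hDG he
  have hD' : ∀ e ∈ D.edgeSet, (e ∈ colorClass G f t ↔ e ∉ colorClass G g t) := by
    intro e he
    have := (hD e (hDE e he)).1 he
    tauto
  obtain ⟨n, hn⟩ := hodd
  obtain ⟨hxe, hx⟩ := last_edge_mem hAm hM hD' n u x p hp hn hu
  have hue : ∃ e ∈ p.edges, u ∈ e := by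
    match p, hn with
    | .cons h p, _ => exact ⟨_, List.mem_cons_self .., Sym2.mem_mk_left _ _⟩
  -- An edge of `M(g,t)` at an end `y` of the path would be either common to both color classes,
  -- or an edge of the component.
  have hmiss : ∀ y ∈ p.support, (∃ e ∈ p.edges, y ∈ e) →
      (∀ e ∈ p.edges, y ∈ e → e ∈ colorClass G f t) → ∀ r ∈ colorClass G g t, y ∉ r := by
    rintro y hy ⟨e, hep, hye⟩ hall r hr hyr
    have heA := hall e hep hye
    have heM := (hD' e (p.edges_subset_edgeSet hep)).1 heA
    by_cases hrA : r ∈ colorClass G f t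
    · exact heM (hAm e heA r hrA y hye hyr ▸ hr)
    · have hrD : r ∈ D.edgeSet := (hD r hr.1).2 (by tauto)
      obtain ⟨z, rfl⟩ := hyr
      exact hrA (hall _ (hcomp y hy z hrD) (Sym2.mem_mk_left _ _))
  have hS : State G t q g (colorClass G g t) (Finset.Icc 1 (q - 1)) u := by
    refine ⟨hg, Finset.Icc_subset_Icc_right (by omega), by rw [Nat.card_Icc]; omega,
      fun e he => ⟨he.1, he.2 ▸ Finset.mem_insert_self _ _⟩, hM,
      hmiss u p.start_mem_support hue hu, fun w _ => ?_⟩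
    refine (dg_le_card_of_properOn (C' := Finset.Icc 1 (q - 1))
      (hg.properOn _) Set.sdiff_subset ?_).trans (by rw [Nat.card_Icc]; omega)
    rintro r ⟨⟨hr, hrc⟩, hrt⟩ -
    exact (Finset.mem_insert.1 hrc).resolve_left fun h => hrt ⟨hr, h⟩
  obtain ⟨ψ, hψ, hequiv, hcol⟩ := hS.slide hA hq htq hAm hM hDG hD' n u x p g _ _ hp hn hu
    (fun _ _ => Iff.rfl) (hmiss x p.end_mem_support hxe hx)
  refine ⟨ψ, hψ, hequiv, Set.ncard_lt_ncard ?_ (Set.toFinite _)⟩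
  rw [Set.ssubset_iff_of_subset]
  · obtain ⟨e, hep, hue⟩ := hue
    have heA := hu e hep hue
    exact ⟨e, ⟨heA, (hcol e).2 (Or.inr ⟨hep, heA⟩)⟩,
      fun h => (hD' e (p.edges_subset_edgeSet hep)).1 heA h.2⟩
  · rintro e ⟨h1, h2⟩
    refine ⟨h1, (hcol e).2 (Or.inl ⟨h2, fun hep => ?_⟩)⟩
    exact (hD' e (p.edges_subset_edgeSet hep)).1 h1 h2

/-- Lemma about an odd path component of `G(f,g,t)`. -/
theorem exists_better_colorings_of_odd_path_component
    {V : Type*} [Fintype V] (q t : ℕ) (hq : 3 ≤ q) (G : SimpleGraph V)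
    (hA : MemA q G) (ht : maxDeg G = t) (htq : q + 2 ≤ t)
    (f g : Sym2 V → ℕ)
    (hf : IsProperEdgeColoring G t f) (hg : IsProperEdgeColoring G t g)
    (hne : ∃ e ∈ G.edgeSet, f e ≠ g e)
    (u x : V) (p : (diffGraph G t f g).Walk u x) (hp : p.IsPath)
    (hodd : Odd p.length)
    (hcomp : IsComponentWalk p) :
    ∃ fb gb, IsProperEdgeColoring G t fb ∧ IsProperEdgeColoring G t gb ∧
      NEquiv G t (q + 1) fb f ∧ NEquiv G t (q + 1) gb g ∧
      (colorClass G f t ∩ colorClass G g t).ncard <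
        (colorClass G fb t ∩ colorClass G gb t).ncard := by
  have hE : (diffGraph G t f g).edgeSet =
      symmDiff (colorClass G f t) (colorClass G g t) := by
    rw [diffGraph, SimpleGraph.edgeSet_fromEdgeSet]
    ext e
    simp only [Set.mem_sdiff]
    refine ⟨fun h => h.1, fun h => ⟨h, ?_⟩⟩
    have heG : e ∈ G.edgeSet := by
      rcases h with h | h
      · exact h.1.1
      · exact h.1.1
    exact G.not_isDiag_of_mem_edgeSet heG
  have hDG : diffGraph G t f g ≤ G := by
    rw [← SimpleGraph.edgeSet_subset_edgeSet, hE]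
    rintro e (h | h)
    · exact h.1.1
    · exact h.1.1
  have hD : ∀ e ∈ G.edgeSet, (e ∈ (diffGraph G t f g).edgeSet ↔
      ¬ (e ∈ colorClass G f t ↔ e ∈ colorClass G g t)) := by
    intro e _
    rw [hE, Set.mem_symmDiff]
    tauto
  -- On a path, the only edge at the first vertex is the first edge.
  have hfirst : ∃ e ∈ p.edges, ∀ r ∈ p.edges, u ∈ r → r = e := by
    match p, hp, hodd with
    | .cons (v := w) h p, hp, _ =>
      rw [Walk.cons_isPath_iff] at hp
      refine ⟨_, List.mem_cons_self .., ?_⟩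
      intro r hr hur
      rcases List.mem_cons.1 hr with hr | hr
      · exact hr
      · obtain ⟨z, rfl⟩ := hur
        exact absurd (p.fst_mem_support_of_mem_edges hr) hp.2
  obtain ⟨e, hep, hfirst⟩ := hfirst
  have heD := p.edges_subset_edgeSet hep
  rw [hE, Set.mem_symmDiff] at heD
  rcases heD with ⟨he, -⟩ | ⟨he, -⟩
  · obtain ⟨ψ, hψ, hequiv, hlt⟩ := exists_better_of_first_edge hq hA htq hf hg hDG hD p hp hodd
      hcomp fun r hr hur => hfirst r hr hur ▸ he
    exact ⟨f, ψ, hf, hψ, NEquiv.refl hf, hequiv, hlt⟩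
  · obtain ⟨ψ, hψ, hequiv, hlt⟩ := exists_better_of_first_edge hq hA htq hg hf hDG
      (fun e he => by rw [hD e he]; tauto) p hp hodd
      hcomp fun r hr hur => hfirst r hr hur ▸ he
    refine ⟨ψ, g, hψ, hg, hequiv, NEquiv.refl hg, ?_⟩
    rwa [Set.inter_comm, Set.inter_comm (colorClass G ψ t)]

end EdgeTrans
end
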